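/- arXiv:2205.13729 — 3 statements merged into one kernel-verified Lean document; each statement's English description precedes it below -/
import Mathlib

section
/- Let m ≥ 2 and n ≥ 1, and let ℂP^m denote the complex projective space of lines in ℂ^{m+1}, equipped with the quotient topology. Let A : ℂP^m → M(n,ℂ) be a continuous map such that for every point x, the matrix A(x) is normal (A(x)A(x)* = A(x)*A(x), where * denotes conjugate transpose) and has n pairwise distinct complex eigenvalues. Then A is diagonalizable over ℂP^m: there exists a continuous map U : ℂP^m → M(n,ℂ) with U(x)*U(x) = I for all x such that U(x)*A(x)U(x) is a diagonal matrix for every x. -/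
open Matrix

/-- The quotient topology on the projectivization of a topological vector space. -/
noncomputable instance projectivizationTopology (K V : Type*) [DivisionRing K] [AddCommGroup V]
    [Module K V] [TopologicalSpace V] : TopologicalSpace (Projectivization K V) :=
  inferInstanceAs (TopologicalSpace (Quotient (projectivizationSetoid K V)))

section
open MeasureTheory
noncomputable def JJ (a b : ℕ) : ℝ := ∫ x in (0:ℝ)..1, x^a * (1-x)^b
lemma JJ_int (a b : ℕ) : IntervalIntegrable (fun x:ℝ => x^a * (1-x)^b) volume 0 1 :=
  (by fun_prop : Continuous (fun x:ℝ => x^a * (1-x)^b)).intervalIntegrable _ _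
lemma JJ_add (a b : ℕ) : JJ a b = JJ (a+1) b + JJ a (b+1) := by
  unfold JJ
  rw [← intervalIntegral.integral_add (JJ_int _ _) (JJ_int _ _)]
  congr 1; ext x; ring
lemma JJ_rec (a b : ℕ) : (a+1) * JJ a (b+1) = (b+1) * JJ (a+1) b := by
  have h : ∫ x in (0:ℝ)..1, ((a+1) * (x^a * (1-x)^(b+1)) - (b+1) * (x^(a+1) * (1-x)^b)) = 0 := by
    rw [intervalIntegral.integral_eq_sub_of_hasDerivAt (f := fun x:ℝ => x^(a+1) * (1-x)^(b+1))]
    · simp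
    · intro x _
      have h1 := (hasDerivAt_pow (a+1) x).mul (((hasDerivAt_id x).const_sub 1).pow (b+1))
      have h2 : ((a:ℝ)+1) * (x^a * (1-x)^(b+1)) - (b+1) * (x^(a+1) * (1-x)^b) =
          ((a + 1 : ℕ):ℝ) * x ^ (a + 1 - 1) * ((fun x : ℝ => 1 - id x) ^ (b + 1)) x +
          x ^ (a + 1) * (((b + 1 : ℕ) : ℝ) * (1 - id x) ^ (b + 1 - 1) * -1) := by
        simp only [Pi.pow_apply, id, Nat.add_sub_cancel]
        push_cast
        ring
      rw [h2]
      exact h1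
    · exact ((JJ_int _ _).const_mul _).sub ((JJ_int _ _).const_mul _)
  rw [intervalIntegral.integral_sub ((JJ_int _ _).const_mul _) ((JJ_int _ _).const_mul _),
    intervalIntegral.integral_const_mul, intervalIntegral.integral_const_mul] at h
  unfold JJ; linarith
lemma JJ_pos (a b : ℕ) : 0 < JJ a b := by
  unfold JJ
  apply intervalIntegral.intervalIntegral_pos_of_pos_on (JJ_int _ _) _ one_pos
  intro x hx
  have : 0 < 1 - x := by linarith [hx.2]
  have := hx.1
  positivity
lemma JJ_left (a b : ℕ) : (a+b+2) * JJ (a+1) b = (a+1) * JJ a b := by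
  have h1 := JJ_add a b
  have h2 := JJ_rec a b
  rw [h1]; linarith
lemma JJ_right (a b : ℕ) : (a+b+2) * JJ a (b+1) = (b+1) * JJ a b := by
  have h1 := JJ_add a b
  have h2 := JJ_rec a b
  rw [h1]; linarith

abbrev S5 := {z : Fin 3 → ℂ // ∑ i, ‖z i‖^2 = 1}

noncomputable instance circMS : MeasurableSpace Circle := borel _
instance circBS : BorelSpace Circle := ⟨rfl⟩

def S5.act (g : Fin 3 → Circle) (z : S5) : S5 :=
  ⟨fun i => g i * z.1 i, by simpa [Circle.norm_coe] using z.2⟩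

lemma S5.act_continuous : Continuous (fun p : (Fin 3 → Circle) × S5 => S5.act p.1 p.2) := by
  unfold S5.act
  refine Continuous.subtype_mk (continuous_pi fun i => ?_) _
  have h1 : Continuous fun p : (Fin 3 → Circle) × S5 => ((p.1 i : Circle) : ℂ) := by fun_prop
  exact h1.mul ((continuous_apply i).comp (continuous_subtype_val.comp continuous_snd))

lemma S5.coord (i : Fin 3) : Continuous (fun z : S5 => z.1 i) :=
  (continuous_apply i).comp continuous_subtype_val

instance : CompactSpace S5 := by
  apply isCompact_iff_compactSpace.mp
  apply Metric.isCompact_of_isClosed_isBounded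
  · exact isClosed_eq (by fun_prop) continuous_const
  · apply (Metric.isBounded_closedBall (x := (0 : Fin 3 → ℂ)) (r := 1)).subset
    intro z hz
    rw [mem_closedBall_zero_iff, pi_norm_le_iff_of_nonneg zero_le_one]
    intro i
    have h : ‖z i‖^2 ≤ 1 := by
      have hz' : ∑ i, ‖z i‖^2 = 1 := hz
      rw [← hz']
      exact Finset.single_le_sum (f := fun i => ‖z i‖^2) (fun i _ => by positivity) (Finset.mem_univ i)
    nlinarith [norm_nonneg (z i)]

noncomputable def parm (p : unitInterval × unitInterval × (Fin 3 → Circle)) : S5 :=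
  ⟨fun i => p.2.2 i * ((![Real.sqrt (1 - p.1.1), Real.sqrt (p.1.1 * (1 - p.2.1.1)),
      Real.sqrt (p.1.1 * p.2.1.1)] i : ℝ) : ℂ), by
    obtain ⟨⟨t, ht0, ht1⟩, ⟨u, hu0, hu1⟩, g⟩ := p
    have h1 : 0 ≤ 1 - t := by linarith
    have h2 : 0 ≤ t * (1 - u) := mul_nonneg ht0 (by linarith)
    have h3 : 0 ≤ t * u := mul_nonneg ht0 hu0
    simp only [Fin.sum_univ_three, norm_mul, Circle.norm_coe, one_mul, Complex.norm_real, Real.norm_eq_abs, sq_abs]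
    simp [Real.sq_sqrt, h1, h2, h3, -Real.sqrt_mul', -Real.sqrt_mul]
    ring⟩

lemma parm_continuous : Continuous parm := by
  unfold parm
  refine Continuous.subtype_mk (continuous_pi fun i => ?_) _
  fin_cases i <;> simp <;> fun_prop

def tnn (t : unitInterval) : NNReal := ⟨t.1, t.2.1⟩

noncomputable def mu1 : Measure unitInterval :=
  (volume : Measure unitInterval).withDensity (fun t => ((tnn t : NNReal) : ENNReal))

lemma mu1_meas : Measurable tnn := by
  apply Measurable.subtype_mk; fun_prop

instance : IsFiniteMeasure mu1 := by
  apply isFiniteMeasure_withDensity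
  apply ne_of_lt
  calc _ ≤ ∫⁻ a : unitInterval, 1 := by
        apply lintegral_mono
        intro t
        simp only [ENNReal.coe_le_one_iff]
        exact t.2.2
    _ < ⊤ := by simp

noncomputable def mu0 : Measure (unitInterval × unitInterval × (Fin 3 → Circle)) :=
  mu1.prod ((volume : Measure unitInterval).prod (Measure.haar : Measure (Fin 3 → Circle)))

noncomputable def sig : Measure S5 := mu0.map parm

instance : IsFiniteMeasure (Measure.haar : Measure (Fin 3 → Circle)) := CompactSpace.isFiniteMeasure
instance : IsFiniteMeasure mu0 := by unfold mu0; infer_instance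
instance : IsFiniteMeasure sig := by unfold sig; infer_instance

lemma sig_integral {E : Type*} [NormedAddCommGroup E] [NormedSpace ℝ E] (h : S5 → E) (hc : Continuous h) :
    ∫ z, h z ∂sig = ∫ p, h (parm p) ∂mu0 := by
  unfold sig
  rw [integral_map parm_continuous.measurable.aemeasurable hc.aestronglyMeasurable_of_compactSpace]

lemma sig_inv (g : Fin 3 → Circle) (h : S5 → ℂ) (hc : Continuous h) :
    ∫ z, h (S5.act g z) ∂sig = ∫ z, h z ∂sig := by
  have hg : Continuous (S5.act g) := S5.act_continuous.comp (by fun_prop : Continuous fun z : S5 => (g, z))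
  rw [sig_integral (fun z => h (S5.act g z)) (hc.comp hg), sig_integral _ hc]
  have hm : MeasurePreserving (fun p : unitInterval × unitInterval × (Fin 3 → Circle) =>
      (p.1, p.2.1, g * p.2.2)) mu0 mu0 := by
    exact (MeasurePreserving.id mu1).prod ((MeasurePreserving.id volume).prod
      (measurePreserving_mul_left Measure.haar g))
  have he : ∀ p, S5.act g (parm p) = parm (p.1, p.2.1, g * p.2.2) := by
    intro p
    apply Subtype.ext
    funext i
    simp [S5.act, parm, mul_assoc]
  simp_rw [he]
  rw [← integral_map (φ := fun p : unitInterval × unitInterval × (Fin 3 → Circle) =>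
      (p.1, p.2.1, g * p.2.2)) (f := fun p => h (parm p)) hm.measurable.aemeasurable, hm.map_eq]
  exact (hc.comp parm_continuous).aestronglyMeasurable_of_compactSpace

noncomputable def NN (α : Fin 3 → ℕ) : ℝ := ∫ z : S5, ∏ i, ‖z.1 i‖^(2 * α i) ∂sig

lemma I_integral (f : ℝ → ℝ) : ∫ x : unitInterval, f x.1 = ∫ x in (0:ℝ)..1, f x := by
  rw [unitInterval.volume_def, integral_subtype_comap measurableSet_Icc, intervalIntegral.integral_of_le zero_le_one,
    integral_Icc_eq_integral_Ioc]

lemma NN_eq (α : Fin 3 → ℕ) : NN α = JJ (α 1 + α 2 + 1) (α 0) * JJ (α 2) (α 1) *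
    (Measure.haar : Measure (Fin 3 → Circle)).real Set.univ := by
  unfold NN
  rw [sig_integral (fun z : S5 => ∏ i, ‖z.1 i‖ ^ (2 * α i))
    (continuous_finsetProd _ fun i _ => (S5.coord i).norm.pow _)]
  have h : ∀ p : unitInterval × unitInterval × (Fin 3 → Circle), ∏ i, ‖(parm p).1 i‖^(2 * α i) =
      (p.1.1 ^ (α 1 + α 2) * (1 - p.1.1)^(α 0)) * ((p.2.1.1 ^ (α 2) * (1 - p.2.1.1)^ (α 1)) * 1) := by
    rintro ⟨⟨t, ht0, ht1⟩, ⟨u, hu0, hu1⟩, g⟩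
    have h1 : 0 ≤ 1 - t := by linarith
    have h2 : 0 ≤ t * (1 - u) := mul_nonneg ht0 (by linarith)
    have h3 : 0 ≤ t * u := mul_nonneg ht0 hu0
    simp only [Fin.prod_univ_three, pow_mul, parm]
    simp only [norm_mul, Circle.norm_coe, one_mul, Complex.norm_real, Real.norm_eq_abs, sq_abs]
    simp [Real.sq_sqrt, h1, h2, h3, -Real.sqrt_mul', -Real.sqrt_mul]
    rw [mul_pow, mul_pow]
    ring
  simp_rw [h]
  unfold mu0
  rw [integral_prod_mul (fun t : unitInterval => (t.1 ^ (α 1 + α 2) * (1 - t.1)^(α 0)))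
    (fun q : unitInterval × (Fin 3 → Circle) => (q.1.1 ^ (α 2) * (1 - q.1.1)^ (α 1)) * 1),
    integral_prod_mul (fun t : unitInterval => (t.1 ^ (α 2) * (1 - t.1)^(α 1))) (fun _ => 1)]
  rw [I_integral (fun t => (t ^ (α 2) * (1 - t)^(α 1)))]
  unfold mu1
  rw [integral_withDensity_eq_integral_smul mu1_meas]
  have : ∀ t : unitInterval, tnn t • (t.1 ^ (α 1 + α 2) * (1 - t.1)^(α 0)) =
     (t.1 ^ (α 1 + α 2 + 1) * (1 - t.1)^(α 0)) := by
    intro t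
    change t.1 * _ = _
    ring
  simp_rw [this]
  rw [I_integral (fun t => (t ^ (α 1 + α 2 + 1) * (1 - t)^(α 0)))]
  simp [JJ, mul_assoc]

lemma NN_pos (α : Fin 3 → ℕ) : 0 < NN α := by
  rw [NN_eq]
  have : 0 < (Measure.haar : Measure (Fin 3 → Circle)).real Set.univ := by
    rw [measureReal_def, ENNReal.toReal_pos_iff]
    exact ⟨isOpen_univ.measure_pos _ Set.univ_nonempty, measure_lt_top _ _⟩
  exact mul_pos (mul_pos (JJ_pos _ _) (JJ_pos _ _)) this

lemma NN_rec (α : Fin 3 → ℕ) (j : Fin 3) :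
    ((∑ i, α i : ℕ) + 3 : ℝ) * NN (α + Pi.single j 1) = (α j + 1) * NN α := by
  rw [NN_eq, NN_eq, ← mul_assoc, ← mul_assoc, ← mul_assoc, ← mul_assoc]
  congr 1
  have e : ((∑ i, α i : ℕ) : ℝ) = α 0 + α 1 + α 2 := by simp [Fin.sum_univ_three]
  rw [e]
  fin_cases j
  · have h1 := JJ_right (α 1 + α 2 + 1) (α 0)
    push_cast at h1
    simp only [Fin.zero_eta, Pi.add_apply, Pi.single_eq_same, ne_eq, one_ne_zero, not_false_eq_true, Pi.single_eq_of_ne, add_zero, Fin.reduceEq]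
    linear_combination (JJ (α 2) (α 1)) * h1
  · have h1 := JJ_left (α 1 + α 2 + 1) (α 0)
    have h2 := JJ_right (α 2) (α 1)
    push_cast at h1
    have e2 : α 1 + 1 + α 2 + 1 = α 1 + α 2 + 1 + 1 := by ring
    simp only [Fin.mk_one, Fin.reduceFinMk, Pi.add_apply, Pi.single_eq_same, ne_eq, one_ne_zero, zero_ne_one, not_false_eq_true, Pi.single_eq_of_ne, add_zero, Fin.reduceEq, Fin.isValue, e2]
    have hp : (α 1 + α 2 + 2 : ℝ) ≠ 0 := by positivity
    apply mul_left_cancel₀ hp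
    linear_combination (α 1 + α 2 + 2 : ℝ) * (JJ (α 2) (α 1 + 1)) * h1 + (α 1 + α 2 + 2 : ℝ) * JJ (α 1 + α 2 + 1) (α 0) * h2
  · have h1 := JJ_left (α 1 + α 2 + 1) (α 0)
    have h2 := JJ_left (α 2) (α 1)
    push_cast at h1
    have e2 : α 1 + (α 2 + 1) + 1 = α 1 + α 2 + 1 + 1 := by ring
    simp only [Fin.mk_one, Fin.reduceFinMk, Pi.add_apply, Pi.single_eq_same, ne_eq, one_ne_zero, zero_ne_one, not_false_eq_true, Pi.single_eq_of_ne, add_zero, Fin.reduceEq, Fin.isValue, e2]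
    have hp : (α 1 + α 2 + 2 : ℝ) ≠ 0 := by positivity
    apply mul_left_cancel₀ hp
    linear_combination (α 1 + α 2 + 2 : ℝ) * (JJ (α 2 + 1) (α 1)) * h1 + (α 1 + α 2 + 2 : ℝ) * JJ (α 1 + α 2 + 1) (α 0) * h2


noncomputable def TT : C(S5, ℂ) →L[ℂ] Lp ℂ 2 sig := ContinuousMap.toLp 2 sig ℂ

lemma TT_inner (f g : C(S5, ℂ)) : inner ℂ (TT f) (TT g) = ∫ z, g z * (starRingEnd ℂ) (f z) ∂sig :=
  ContinuousMap.inner_toLp sig f g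

lemma TT_orth (f g : C(S5, ℂ)) (γ : Fin 3 → Circle) (a b : ℂ) (hf : ∀ z, f (S5.act γ z) = a * f z)
    (hg : ∀ z, g (S5.act γ z) = b * g z) (hab : b * (starRingEnd ℂ) a ≠ 1) :
    inner ℂ (TT f) (TT g) = 0 := by
  rw [TT_inner]
  have h := sig_inv γ (fun z => g z * (starRingEnd ℂ) (f z)) (by fun_prop)
  simp only [hf, hg, map_mul] at h
  have h2 : ∀ z, b * g z * ((starRingEnd ℂ) a * (starRingEnd ℂ) (f z)) =
    (b * (starRingEnd ℂ) a) * (g z * (starRingEnd ℂ) (f z)) := fun z => by ring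
  simp_rw [h2] at h
  rw [integral_const_mul] at h
  have h3 : (b * (starRingEnd ℂ) a - 1) * ∫ z, g z * (starRingEnd ℂ) (f z) ∂sig = 0 := by
    linear_combination h
  rcases mul_eq_zero.mp h3 with h4 | h4
  · exact absurd (sub_eq_zero.mp h4) hab
  · exact h4

lemma exists_circ (n : ℤ) (hn : n ≠ 0) : ∃ ζ : Circle, (ζ : ℂ)^n ≠ 1 := by
  refine ⟨Circle.exp (Real.pi / n), ?_⟩
  rw [Circle.coe_exp, ← Complex.exp_int_mul]
  have : (n:ℂ) ≠ 0 := by exact_mod_cast hn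
  have h : (n : ℂ) * (((Real.pi / n : ℝ) : ℂ) * Complex.I) = Real.pi * Complex.I := by
    push_cast; field_simp
  rw [h, Complex.exp_pi_mul_I]
  norm_num

lemma circ_conj (ζ : Circle) (p q : ℤ) : (ζ:ℂ)^p * (starRingEnd ℂ) ((ζ:ℂ)^q) = (ζ:ℂ)^(p - q) := by
  rw [map_zpow₀, ← Circle.coe_inv_eq_conj, Circle.coe_inv, _root_.inv_zpow, zpow_sub₀ (Circle.coe_ne_zero ζ), div_eq_mul_inv]

/-- torus weight -/
def HasW (f : C(S5, ℂ)) (w : Fin 3 → ℤ) : Prop :=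
  ∀ i (ζ : Circle) z, f (S5.act (Function.update 1 i ζ) z) = (ζ:ℂ)^(w i) * f z

def HasC (f : C(S5, ℂ)) (k : ℤ) : Prop :=
  ∀ (ζ : Circle) z, f (S5.act (fun _ => ζ) z) = (ζ:ℂ)^k * f z

lemma orthW {f g : C(S5, ℂ)} {w v : Fin 3 → ℤ} (hf : HasW f w) (hg : HasW g v) (h : w ≠ v) :
    inner ℂ (TT f) (TT g) = 0 := by
  obtain ⟨i, hi⟩ := Function.ne_iff.mp h
  obtain ⟨ζ, hζ⟩ := exists_circ (v i - w i) (sub_ne_zero.mpr (Ne.symm hi))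
  exact TT_orth f g _ _ _ (hf i ζ) (hg i ζ) (by rwa [circ_conj])

lemma orthC {f g : C(S5, ℂ)} {w v : ℤ} (hf : HasC f w) (hg : HasC g v) (h : w ≠ v) :
    inner ℂ (TT f) (TT g) = 0 := by
  obtain ⟨ζ, hζ⟩ := exists_circ (v - w) (sub_ne_zero.mpr (Ne.symm h))
  exact TT_orth f g _ _ _ (hf ζ) (hg ζ) (by rwa [circ_conj])

noncomputable def zz (j : Fin 3) : C(S5, ℂ) := ⟨fun z => z.1 j, S5.coord j⟩

noncomputable def mono (α : Fin 3 → ℕ) : C(S5, ℂ) := ∏ i, zz i ^ α i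

lemma mono_apply (α : Fin 3 → ℕ) (z : S5) : mono α z = ∏ i, z.1 i ^ α i := by
  simp [mono, zz, ContinuousMap.coe_prod]

lemma mono_W (α : Fin 3 → ℕ) : HasW (mono α) (fun i => α i) := by
  intro i ζ z
  simp only [mono_apply, S5.act, mul_pow, Finset.prod_mul_distrib, zpow_natCast]
  congr 1
  rw [Finset.prod_eq_single i]
  · simp
  · intro b _ hb
    simp [Function.update_of_ne hb]
  · simp

lemma mono_C (α : Fin 3 → ℕ) : HasC (mono α) (∑ i, α i : ℕ) := by
  intro ζ z
  simp only [mono_apply, S5.act, mul_pow, Finset.prod_mul_distrib, zpow_natCast]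
  rw [Finset.prod_pow_eq_pow_sum]

lemma mono_mul_conj (α : Fin 3 → ℕ) (z : S5) :
    mono α z * (starRingEnd ℂ) (mono α z) = ((∏ i, ‖z.1 i‖^(2 * α i) : ℝ) : ℂ) := by
  rw [Complex.mul_conj, Complex.normSq_eq_norm_sq, mono_apply, norm_prod, ← Finset.prod_pow]
  congr 1
  apply Finset.prod_congr rfl
  intro i _
  rw [norm_pow, ← pow_mul, mul_comm]

lemma mono_norm (α : Fin 3 → ℕ) : ‖TT (mono α)‖^2 = NN α := by
  have h : ((‖TT (mono α)‖^2 : ℝ) : ℂ) = NN α := by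
    have := inner_self_eq_norm_sq_to_K (𝕜 := ℂ) (TT (mono α))
    push_cast
    rw [TT_inner] at this
    simp_rw [mono_mul_conj] at this
    rw [integral_complex_ofReal] at this
    exact this.symm
  exact_mod_cast h

lemma pyth {E ι : Type*} [NormedAddCommGroup E] [InnerProductSpace ℂ E] (s : Finset ι) (a : ι → ℂ) (v : ι → E)
    (hv : ∀ i j, i ≠ j → inner ℂ (v i) (v j) = 0) :
    ‖∑ i ∈ s, a i • v i‖^2 = ∑ i ∈ s, ‖a i‖^2 * ‖v i‖^2 := by
  classical
  induction s using Finset.induction_on with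
  | empty => simp
  | insert i s hi ih =>
    rw [Finset.sum_insert hi, Finset.sum_insert hi, ← ih]
    have : inner ℂ (a i • v i) (∑ j ∈ s, a j • v j) = 0 := by
      rw [inner_sum]
      apply Finset.sum_eq_zero
      intro j hj
      rw [inner_smul_left, inner_smul_right, hv i j (by rintro rfl; exact hi hj)]; simp
    have h2 := norm_add_sq (𝕜 := ℂ) (a i • v i) (∑ j ∈ s, a j • v j)
    rw [h2, this, norm_smul]; simp; ring

noncomputable def Hol (K : ℕ) : Submodule ℂ C(S5, ℂ) := Submodule.span ℂ (mono '' {α | K ≤ ∑ i, α i})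

lemma mono_succ (α : Fin 3 → ℕ) (j : Fin 3) : mono (α + Pi.single j 1) = zz j * mono α := by
  unfold mono
  simp only [Pi.add_apply, pow_add, Finset.prod_mul_distrib]
  rw [mul_comm]
  congr 1
  rw [Finset.prod_eq_single j]
  · simp
  · intro b _ hb
    simp [Pi.single_eq_of_ne hb]
  · simp

lemma hvec (α : Fin 3 → ℕ) (j : Fin 3) : ∃ h : C(S5, ℂ), (∀ K, K ≤ ∑ i, α i → h ∈ Hol (K - 1)) ∧
    HasW (star (zz j) * mono α - h) (fun i => α i - Pi.single (M := fun _ => ℤ) j 1 i) ∧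
    ‖TT (star (zz j) * mono α - h)‖^2 ≤ 1 / ((∑ i, α i : ℕ) + 3) * NN α := by
  have hWz : HasW (star (zz j) * mono α) (fun i => α i - Pi.single (M := fun _ => ℤ) j 1 i) := by
    intro i ζ z
    have := mono_W α i ζ z
    simp only [ContinuousMap.mul_apply, ContinuousMap.star_apply]
    rw [this]
    by_cases hij : i = j
    · subst hij
      have e : (zz i) (S5.act (Function.update 1 i ζ) z) = (ζ:ℂ)^(1:ℤ) * zz i z := by simp [zz, S5.act]
      rw [e, star_mul]
      have := circ_conj ζ (α i) 1
      simp only [Pi.single_eq_same, ← this]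
      simp only [RCLike.star_def]
      ring
    · have e : (zz j) (S5.act (Function.update 1 i ζ) z) = zz j z := by
        simp [zz, S5.act, Function.update_of_ne (Ne.symm hij)]
      rw [e]
      simp [Pi.single_eq_of_ne hij]; ring
  have hnz : ‖TT (star (zz j) * mono α)‖^2 = NN (α + Pi.single j 1) := by
    rw [← mono_norm, mono_succ]
    have : ((‖TT (star (zz j) * mono α)‖^2 : ℝ) : ℂ) = ((‖TT (zz j * mono α)‖^2 : ℝ) : ℂ) := by
      have h1 := inner_self_eq_norm_sq_to_K (𝕜 := ℂ) (TT (star (zz j) * mono α))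
      have h2 := inner_self_eq_norm_sq_to_K (𝕜 := ℂ) (TT (zz j * mono α))
      rw [TT_inner] at h1 h2
      push_cast
      rw [show ((‖TT (star (zz j) * mono α)‖:ℝ):ℂ)^2 = _ from h1.symm, show ((‖TT (zz j * mono α)‖:ℝ):ℂ)^2 = _ from h2.symm]
      congr 1
      ext z
      simp
      ring
    exact_mod_cast this
  have hrec := NN_rec α j
  have hN := NN_pos α
  by_cases h0 : α j = 0
  · refine ⟨0, fun K _ => Submodule.zero_mem _, by simpa using hWz, ?_⟩
    rw [sub_zero, hnz]
    rw [h0] at hrec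
    apply le_of_eq
    have : ((∑ i, α i : ℕ) + 3 : ℝ) ≠ 0 := by positivity
    field_simp
    linear_combination hrec
  · obtain ⟨β, rfl⟩ : ∃ β : Fin 3 → ℕ, α = β + Pi.single j 1 := by
      refine ⟨α - Pi.single j 1, ?_⟩
      funext i
      by_cases hij : i = j
      · subst hij; simp; omega
      · simp [Pi.single_eq_of_ne hij]
    have hsum : ∑ i, (β + Pi.single j 1 : Fin 3 → ℕ) i = ∑ i, β i + 1 := by
      simp [Finset.sum_add_distrib]
    set k := ∑ i, β i with hk
    set ρ : ℝ := (β j + 1) / (k + 3) with hρ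
    have hrb := NN_rec β j
    have hNb := NN_pos β
    refine ⟨(ρ:ℂ) • mono β, ?_, ?_, ?_⟩
    · intro K hK
      apply Submodule.smul_mem
      apply Submodule.subset_span
      refine ⟨β, ?_, rfl⟩
      show K - 1 ≤ ∑ i, β i
      omega
    · intro i ζ z
      have h1 := hWz i ζ z
      have h2 := mono_W β i ζ z
      simp only [ContinuousMap.sub_apply, ContinuousMap.smul_apply] at *
      have e : (((β + Pi.single j 1 : Fin 3 → ℕ) i : ℕ) : ℤ) - Pi.single (M := fun _ => ℤ) j 1 i = β i := by
        by_cases hij : i = j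
        · subst hij; simp
        · simp [Pi.single_eq_of_ne hij]
      rw [h1, h2, e]
      simp only [smul_eq_mul]
      ring
    · rw [map_sub, map_smul]
      rw [@norm_sub_sq ℂ, hnz, inner_smul_right, norm_smul, mul_pow, mono_norm]
      have hin : inner ℂ (TT (star (zz j) * mono (β + Pi.single j 1))) (TT (mono β)) = NN (β + Pi.single j 1) := by
        rw [← mono_norm]
        have h1 := inner_self_eq_norm_sq_to_K (𝕜 := ℂ) (TT (mono (β + Pi.single j 1)))
        push_cast
        rw [show ((‖TT (mono (β + Pi.single j 1))‖:ℝ):ℂ)^2 = _ from h1.symm, TT_inner, TT_inner]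
        congr 1
        ext z
        simp [mono_succ]
        ring
      rw [hin, hsum]
      rw [hsum] at hrec
      simp only [← Complex.ofReal_mul, RCLike.re_eq_complex_re, Complex.ofReal_re, Complex.norm_real, Real.norm_eq_abs, sq_abs]
      have e1 : NN (β + Pi.single j 1) = ρ * NN β := by
        rw [hρ]; field_simp; linear_combination hrb
      have e2 : NN (β + Pi.single j 1 + Pi.single j 1) = (β j + 2) / (k + 4) * (ρ * NN β) := by
        rw [← e1]
        simp at hrec
        field_simp
        linear_combination hrec
      rw [e1, e2]
      have hρ0 : 0 ≤ ρ := by positivity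
      have : (β j + 2 : ℝ) / (k + 4) - ρ ≤ 1 / ((k + 1 : ℕ) + 3) := by
        rw [hρ]
        push_cast
        rw [show (k + 1 + 3 : ℝ) = k + 4 by ring, div_sub_div _ _ (by positivity) (by positivity), div_le_div_iff₀ (by positivity) (by positivity)]
        have hb : (0:ℝ) ≤ β j := by positivity
        have hkp : (0:ℝ) ≤ k := by positivity
        nlinarith
      nlinarith [mul_nonneg hρ0 hNb.le]

lemma hankel (j : Fin 3) (K : ℕ) (f : C(S5, ℂ)) (hf : f ∈ Hol K) :
    ∃ g ∈ Hol (K - 1), ‖TT (star (zz j) * f - g)‖^2 ≤ 1 / (K + 3) * ‖TT f‖^2 := by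
  choose h hh1 hh2 hh3 using fun α => hvec α j
  obtain ⟨l, hl, rfl⟩ := (Finsupp.mem_span_image_iff_linearCombination ℂ).mp hf
  have hl' : ∀ α ∈ l.support, K ≤ ∑ i, α i := fun α hα => (Finsupp.mem_supported ℂ l).mp hl hα
  refine ⟨∑ α ∈ l.support, l α • h α, ?_, ?_⟩
  · apply Submodule.sum_mem
    intro α hα
    exact Submodule.smul_mem _ _ (hh1 α K (hl' α hα))
  · have e1 : star (zz j) * Finsupp.linearCombination ℂ mono l - ∑ α ∈ l.support, l α • h α =
        ∑ α ∈ l.support, l α • (star (zz j) * mono α - h α) := by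
      rw [Finsupp.linearCombination_apply, Finsupp.sum, Finset.mul_sum, ← Finset.sum_sub_distrib]
      apply Finset.sum_congr rfl
      intro α _
      rw [smul_sub, mul_smul_comm]
    rw [e1, Finsupp.linearCombination_apply, Finsupp.sum, map_sum, map_sum]
    simp_rw [map_smul]
    rw [pyth l.support l (fun α => TT (star (zz j) * mono α - h α)), pyth l.support l (fun α => TT (mono α)),
      Finset.mul_sum]
    · apply Finset.sum_le_sum
      intro α hα
      rw [mono_norm]
      have h3 := hh3 α
      have hN := NN_pos α
      have hK : (K:ℝ) ≤ (∑ i, α i : ℕ) := by exact_mod_cast hl' α hα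
      have : 1 / (((∑ i, α i : ℕ) : ℝ) + 3) ≤ 1 / ((K:ℝ) + 3) := by
        apply one_div_le_one_div_of_le (by positivity); linarith
      have h4 : ‖TT (star (zz j) * mono α - h α)‖^2 ≤ 1 / ((K:ℝ) + 3) * NN α :=
        h3.trans (mul_le_mul_of_nonneg_right this hN.le)
      calc _ ≤ ‖l α‖^2 * (1 / ((K:ℝ) + 3) * NN α) := mul_le_mul_of_nonneg_left h4 (by positivity)
        _ = _ := by ring
    · intro α β hab
      apply orthW (mono_W α) (mono_W β)
      intro h; apply hab; funext i
      have := congrFun h i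
      exact_mod_cast this
    · intro α β hab
      apply orthW (hh2 α) (hh2 β)
      intro h; apply hab; funext i
      have := congrFun h i
      simp only [sub_left_inj] at this
      exact_mod_cast this

def Good (s : C(S5, ℂ)) : Prop := ∀ ε > 0, ∀ M : ℕ, ∃ K, ∀ f ∈ Hol K, ∃ g ∈ Hol M,
  ‖TT (s * f - g)‖ ≤ ε * ‖TT f‖

lemma TT_mul_le (s f : C(S5, ℂ)) : ‖TT (s * f)‖ ≤ ‖s‖ * ‖TT f‖ := by
  apply Lp.norm_le_mul_norm_of_ae_le_mul
  have h1 := ContinuousMap.coeFn_toLp (p := 2) (𝕜 := ℂ) sig (s * f)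
  have h2 := ContinuousMap.coeFn_toLp (p := 2) (𝕜 := ℂ) sig f
  filter_upwards [h1, h2] with z hz1 hz2
  unfold TT
  rw [hz1, hz2, ContinuousMap.mul_apply, norm_mul]
  exact mul_le_mul_of_nonneg_right (s.norm_coe_le_norm z) (norm_nonneg _)

lemma zz_Hol (j : Fin 3) (K : ℕ) (f : C(S5, ℂ)) (hf : f ∈ Hol K) : zz j * f ∈ Hol K := by
  unfold Hol at *
  induction hf using Submodule.span_induction with
  | mem x hx =>
    obtain ⟨α, hα, rfl⟩ := hx
    rw [← mono_succ]
    apply Submodule.subset_span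
    refine ⟨_, ?_, rfl⟩
    have : K ≤ ∑ i, α i := hα
    simp [Finset.sum_add_distrib]; omega
  | zero => simp
  | add x y _ _ hx hy => rw [mul_add]; exact Submodule.add_mem _ hx hy
  | smul a x _ hx => rw [mul_smul_comm]; exact Submodule.smul_mem _ _ hx

lemma good_zz (j : Fin 3) : Good (zz j) := by
  intro ε hε M
  refine ⟨M, fun f hf => ⟨zz j * f, zz_Hol j M f hf, ?_⟩⟩
  simp; positivity

lemma good_star (j : Fin 3) : Good (star (zz j)) := by
  intro ε hε M
  obtain ⟨n, hn⟩ := exists_nat_gt (1 / ε^2)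
  refine ⟨max n (M + 1), fun f hf => ?_⟩
  obtain ⟨g, hg, h⟩ := hankel j _ f hf
  refine ⟨g, ?_, ?_⟩
  · refine Submodule.span_mono (Set.image_mono ?_) hg
    intro α hα
    have : max n (M+1) - 1 ≤ ∑ i, α i := hα
    show M ≤ ∑ i, α i
    omega
  · apply abs_le_of_sq_le_sq' _ (by positivity) |>.2
    refine h.trans ?_
    rw [mul_pow]
    apply mul_le_mul_of_nonneg_right _ (by positivity)
    have h1 : (n:ℝ) ≤ (max n (M+1) : ℕ) := by exact_mod_cast le_max_left _ _
    rw [div_lt_iff₀ (by positivity)] at hn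
    rw [div_le_iff₀ (by positivity)]
    nlinarith [sq_nonneg ε]

lemma good_const (c : ℂ) : Good (algebraMap ℂ C(S5, ℂ) c) := by
  intro ε hε M
  refine ⟨M, fun f hf => ⟨c • f, Submodule.smul_mem _ _ hf, ?_⟩⟩
  rw [Algebra.smul_def]
  simp; positivity

lemma good_add {s t : C(S5, ℂ)} (hs : Good s) (ht : Good t) : Good (s + t) := by
  intro ε hε M
  obtain ⟨K1, h1⟩ := hs (ε/2) (by positivity) M
  obtain ⟨K2, h2⟩ := ht (ε/2) (by positivity) M
  refine ⟨max K1 K2, fun f hf => ?_⟩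
  obtain ⟨g1, hg1, e1⟩ := h1 f (Submodule.span_mono (Set.image_mono fun α (hα : max K1 K2 ≤ _) => le_trans (le_max_left _ _) hα) hf)
  obtain ⟨g2, hg2, e2⟩ := h2 f (Submodule.span_mono (Set.image_mono fun α (hα : max K1 K2 ≤ _) => le_trans (le_max_right _ _) hα) hf)
  refine ⟨g1 + g2, Submodule.add_mem _ hg1 hg2, ?_⟩
  rw [show (s + t) * f - (g1 + g2) = (s * f - g1) + (t * f - g2) by ring, map_add]
  refine (norm_add_le _ _).trans ?_
  linarith

lemma good_mul {s t : C(S5, ℂ)} (hs : Good s) (ht : Good t) : Good (s * t) := by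
  intro ε hε M
  set δ := min 1 (ε / (‖s‖ + ‖t‖ + 1)) with hδ
  have hδ0 : 0 < δ := lt_min one_pos (by positivity)
  have hδ1 : δ ≤ 1 := min_le_left _ _
  have hδ2 : δ * (‖s‖ + ‖t‖ + 1) ≤ ε := by
    rw [← le_div_iff₀ (by positivity)]; exact min_le_right _ _
  obtain ⟨K1, h1⟩ := hs δ hδ0 M
  obtain ⟨K2, h2⟩ := ht δ hδ0 K1
  refine ⟨K2, fun f hf => ?_⟩
  obtain ⟨g, hg, e⟩ := h2 f hf
  obtain ⟨k, hk, e'⟩ := h1 g hg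
  refine ⟨k, hk, ?_⟩
  have hgn : ‖TT g‖ ≤ (‖t‖ + 1) * ‖TT f‖ := by
    have : TT g = TT (t * f) - TT (t * f - g) := by rw [← map_sub]; congr 1; ring
    rw [this]
    refine (norm_sub_le _ _).trans ?_
    have := TT_mul_le t f
    nlinarith [norm_nonneg (TT f)]
  rw [show s * t * f - k = s * (t * f - g) + (s * g - k) by ring, map_add]
  refine (norm_add_le _ _).trans ?_
  have h3 := TT_mul_le s (t * f - g)
  have h4 : ‖s‖ * ‖TT (t * f - g)‖ ≤ ‖s‖ * (δ * ‖TT f‖) := mul_le_mul_of_nonneg_left e (norm_nonneg _)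
  have h5 : δ * ‖TT g‖ ≤ δ * ((‖t‖ + 1) * ‖TT f‖) := mul_le_mul_of_nonneg_left hgn hδ0.le
  have h6 := mul_le_mul_of_nonneg_right hδ2 (norm_nonneg (TT f))
  nlinarith

lemma good_all (s : C(S5, ℂ)) : Good s := by
  have hA : (StarAlgebra.adjoin ℂ (Set.range zz)).topologicalClosure = ⊤ := by
    apply ContinuousMap.starSubalgebra_topologicalClosure_eq_top_of_separatesPoints
    intro x y hxy
    have : x.1 ≠ y.1 := fun h => hxy (Subtype.ext h)
    obtain ⟨i, hi⟩ := Function.ne_iff.mp this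
    exact ⟨zz i, ⟨zz i, StarAlgebra.subset_adjoin ℂ _ ⟨i, rfl⟩, rfl⟩, hi⟩
  have hgood : ∀ t ∈ StarAlgebra.adjoin ℂ (Set.range zz), Good t := by
    intro t ht
    have ht' : t ∈ Algebra.adjoin ℂ (Set.range zz ∪ star (Set.range zz)) := ht
    induction ht' using Algebra.adjoin_induction with
    | mem x hx =>
      rcases hx with ⟨i, rfl⟩ | ⟨i, hi⟩
      · exact good_zz i
      · have : x = star (zz i) := by rw [hi]; simp
        rw [this]; exact good_star i
    | algebraMap r => exact good_const r
    | add x y hx hy h1 h2 => exact good_add (h1 hx) (h2 hy)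
    | mul x y hx hy h1 h2 => exact good_mul (h1 hx) (h2 hy)
  have hs : s ∈ closure ((StarAlgebra.adjoin ℂ (Set.range zz) : StarSubalgebra ℂ C(S5, ℂ)) : Set C(S5, ℂ)) := by
    have : s ∈ (StarAlgebra.adjoin ℂ (Set.range zz)).topologicalClosure := by rw [hA]; trivial
    exact this
  intro ε hε M
  obtain ⟨t, ht, hst⟩ := Metric.mem_closure_iff.mp hs (ε/2) (by positivity)
  obtain ⟨K, hK⟩ := hgood t ht (ε/2) (by positivity) M
  refine ⟨K, fun f hf => ?_⟩
  obtain ⟨g, hg, e⟩ := hK f hf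
  refine ⟨g, hg, ?_⟩
  rw [show s * f - g = (s - t) * f + (t * f - g) by ring, map_add]
  refine (norm_add_le _ _).trans ?_
  have h1 := TT_mul_le (s - t) f
  rw [dist_eq_norm] at hst
  nlinarith [norm_nonneg (TT f)]


noncomputable def PP (k : ℕ) : Finset (Fin 3 → ℕ) := Finset.piAntidiag Finset.univ k

lemma mem_PP (k : ℕ) (α : Fin 3 → ℕ) : α ∈ PP k ↔ ∑ i, α i = k := by
  simp [PP, Finset.mem_piAntidiag]

lemma card_PP (k : ℕ) : 2 * (PP k).card = (k+1) * (k+2) := by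
  have h : (PP k).card = (k+2).choose k := by
    have := Finset.card_finsuppAntidiag_nat_eq_choose (s := (Finset.univ : Finset (Fin 3))) k
    rw [Finset.finsuppAntidiag, Finset.card_map, Finset.card_attach] at this
    rw [PP, this]
    simp
    congr 1; omega
  rw [h, Nat.choose_symm_add]
  have := Nat.descFactorial_eq_factorial_mul_choose (k+2) 2
  simp only [Nat.factorial_two] at this
  rw [← this]
  simp [Nat.descFactorial]

lemma HasC_mul {f g : C(S5, ℂ)} {a b : ℤ} (hf : HasC f a) (hg : HasC g b) : HasC (f * g) (a + b) := by
  intro ζ z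
  rw [ContinuousMap.mul_apply, hf, hg, zpow_add₀ (Circle.coe_ne_zero ζ), ContinuousMap.mul_apply]; ring

lemma HasC_sum {ι : Type*} (s : Finset ι) {f : ι → C(S5, ℂ)} {a : ℤ} (hf : ∀ i ∈ s, HasC (f i) a) : HasC (∑ i ∈ s, f i) a := by
  intro ζ z
  rw [ContinuousMap.sum_apply, ContinuousMap.sum_apply, Finset.mul_sum]
  exact Finset.sum_congr rfl fun i hi => hf i hi ζ z

lemma HasC_smul (c : ℂ) {f : C(S5, ℂ)} {a : ℤ} (hf : HasC f a) : HasC (c • f) a := by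
  intro ζ z
  simp [hf ζ z]; ring

lemma near {E : Type*} [NormedAddCommGroup E] [InnerProductSpace ℂ E] (F G : E) (h : inner ℂ G F = 0) :
    ‖F‖ ≤ ‖F - G‖ := by
  have h1 := norm_sub_sq (𝕜 := ℂ) F G
  have h2 : inner ℂ F G = 0 := inner_eq_zero_symm.mp h
  rw [h2] at h1
  simp at h1
  apply abs_le_of_sq_le_sq' _ (by positivity) |>.2
  nlinarith [sq_nonneg ‖G‖]

lemma TT_isom {n : ℕ} (V : Fin n → Fin n → C(S5, ℂ))
    (hV : ∀ z i j, ∑ l, (starRingEnd ℂ) (V l i z) * V l j z = if i = j then 1 else 0)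
    (f : Fin n → C(S5, ℂ)) :
    ∑ l, ‖TT (∑ i, V l i * f i)‖^2 = ∑ i, ‖TT (f i)‖^2 := by
  have hn : ∀ g : C(S5, ℂ), ((‖TT g‖^2 : ℝ) : ℂ) = ∫ z, g z * (starRingEnd ℂ) (g z) ∂sig := by
    intro g
    have h1 := inner_self_eq_norm_sq_to_K (𝕜 := ℂ) (TT g)
    rw [TT_inner] at h1
    push_cast
    exact h1.symm
  have hint : ∀ g : C(S5, ℂ), Integrable (fun z => g z * (starRingEnd ℂ) (g z)) sig := by
    intro g
    apply Continuous.integrable_of_hasCompactSupport (by fun_prop) (HasCompactSupport.of_compactSpace _)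
  have : ((∑ l, ‖TT (∑ i, V l i * f i)‖^2 : ℝ) : ℂ) = ((∑ i, ‖TT (f i)‖^2 : ℝ) : ℂ) := by
    rw [Complex.ofReal_sum, Complex.ofReal_sum]
    simp_rw [hn]
    rw [← integral_finsetSum _ (fun i _ => hint _), ← integral_finsetSum _ (fun i _ => hint _)]
    congr 1
    ext z
    simp only [ContinuousMap.sum_apply, ContinuousMap.mul_apply, map_sum, map_mul, Finset.sum_mul_sum]
    rw [Finset.sum_comm]
    apply Finset.sum_congr rfl
    intro i _
    rw [Finset.sum_comm]
    have : ∀ j, ∑ l, V l i z * f i z * ((starRingEnd ℂ) (V l j z) * (starRingEnd ℂ) (f j z)) =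
        (if j = i then 1 else 0) * (f i z * (starRingEnd ℂ) (f j z)) := by
      intro j
      rw [← hV z j i, Finset.sum_mul]
      apply Finset.sum_congr rfl
      intro l _; ring
    simp_rw [this]
    simp
  exact_mod_cast this

lemma Hol_mono {K M : ℕ} (h : M ≤ K) : Hol K ≤ Hol M :=
  Submodule.span_mono (Set.image_mono fun α (hα : K ≤ _) => le_trans h hα)

set_option maxHeartbeats 2000000 in
lemma dimcount {n : ℕ} (V : Fin n → Fin n → C(S5, ℂ))
    (hV : ∀ z i j, ∑ l, (starRingEnd ℂ) (V l i z) * V l j z = if i = j then 1 else 0)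
    (p q : Fin n → ℤ) (hC : ∀ l i, HasC (V l i) (p i - q l)) :
    ∃ K0 : ℤ, ∀ k ≥ K0, ∑ i, (PP (k - p i).toNat).card ≤ ∑ l, (PP (k - q l).toNat).card := by
  set ε : ℝ := 1 / (2 * (n + 1)) with hε
  have hε0 : 0 < ε := by positivity
  choose K hK using fun l i => good_all (V l i) ε hε0 0
  obtain ⟨KK, hKK⟩ : ∃ KK : ℕ, ∀ l i, K l i ≤ KK := 
    ⟨∑ l, ∑ i, K l i, fun l i => (Finset.single_le_sum (f := fun i => K l i) (fun _ _ => Nat.zero_le _) (Finset.mem_univ i)).trans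
      (Finset.single_le_sum (f := fun l => ∑ i, K l i) (fun _ _ => Nat.zero_le _) (Finset.mem_univ l))⟩
  obtain ⟨P, hP⟩ : ∃ P : ℤ, ∀ i, p i ≤ P := by
    obtain ⟨P, hP⟩ := (Set.finite_range p).bddAbove
    exact ⟨P, fun i => hP ⟨i, rfl⟩⟩
  refine ⟨KK + P, fun k hk => ?_⟩
  have hkp : ∀ i, (KK : ℤ) ≤ k - p i := fun i => by have := hP i; omega
  let f : ((Σ i, PP (k - p i).toNat) → ℂ) →ₗ[ℂ] (Fin n → C(S5, ℂ)) :=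
    { toFun := fun a i => ∑ α : PP (k - p i).toNat, a ⟨i, α⟩ • mono α.1
      map_add' := by
        intro a b; funext i; simp [add_smul, Finset.sum_add_distrib]
      map_smul' := by
        intro c a; funext i; simp [mul_smul, Finset.smul_sum] }
  let F : ((Σ i, PP (k - p i).toNat) → ℂ) →ₗ[ℂ] (Fin n → C(S5, ℂ)) :=
    { toFun := fun a l => ∑ i, V l i * f a i
      map_add' := by
        intro a b; funext i; simp only [map_add, Pi.add_apply, mul_add, Finset.sum_add_distrib]
      map_smul' := by
        intro c a; funext i; simp only [map_smul, Pi.smul_apply, mul_smul_comm, Finset.smul_sum, RingHom.id_apply] }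
  let L : ((Σ i, PP (k - p i).toNat) → ℂ) →ₗ[ℂ] ((Σ l, PP (k - q l).toNat) → ℂ) :=
    { toFun := fun a lb => inner ℂ (TT (mono lb.2.1)) (TT (F a lb.1))
      map_add' := by
        intro a b; funext i; simp [inner_add_right]
      map_smul' := by
        intro c a; funext i; simp [inner_smul_right] }
  have hfC : ∀ a i, HasC (f a i) (k - p i) := by
    intro a i
    apply HasC_sum
    intro α _
    apply HasC_smul
    have := mono_C α.1
    rw [(mem_PP _ _).mp α.2, Int.toNat_of_nonneg (by have := hkp i; omega)] at this
    exact this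
  have hfH : ∀ a i, f a i ∈ Hol KK := by
    intro a i
    apply Submodule.sum_mem
    intro α _
    apply Submodule.smul_mem
    apply Submodule.subset_span
    refine ⟨α.1, ?_, rfl⟩
    show KK ≤ ∑ i, α.1 i
    rw [(mem_PP _ _).mp α.2]
    have := hkp i; omega
  have hFC : ∀ a l, HasC (F a l) (k - q l) := by
    intro a l
    apply HasC_sum
    intro i _
    have := HasC_mul (hC l i) (hfC a i)
    rwa [show p i - q l + (k - p i) = k - q l by ring] at this
  have hinj : Function.Injective L := by
    rw [← LinearMap.ker_eq_bot, LinearMap.ker_eq_bot']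
    intro a ha
    have horth : ∀ l, ∀ g ∈ Hol 0, inner ℂ (TT g) (TT (F a l)) = 0 := by
      intro l g hg
      unfold Hol at hg
      induction hg using Submodule.span_induction with
      | mem x hx =>
        obtain ⟨β, -, rfl⟩ := hx
        by_cases hb : ((∑ i, β i : ℕ) : ℤ) = k - q l
        · have hb' : β ∈ PP (k - q l).toNat := by rw [mem_PP]; omega
          exact congrFun ha ⟨l, ⟨β, hb'⟩⟩
        · exact orthC (mono_C β) (hFC a l) hb
      | zero => simp
      | add x y _ _ hx hy => rw [map_add, inner_add_left, hx, hy, add_zero]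
      | smul c x _ hx => rw [map_smul, inner_smul_left, hx, mul_zero]
    set s : Fin n → ℝ := fun i => ‖TT (f a i)‖ with hs
    have hFn : ∀ l, ‖TT (F a l)‖ ≤ ε * ∑ i, s i := by
      intro l
      choose g hg hgn using fun i => hK l i (f a i) (Hol_mono (hKK l i) (hfH a i))
      have h1 := near (TT (F a l)) (TT (∑ i, g i)) (horth l _ (Submodule.sum_mem _ fun i _ => hg i))
      refine h1.trans ?_
      rw [← map_sub]
      have : F a l - ∑ i, g i = ∑ i, (V l i * f a i - g i) := by
        rw [Finset.sum_sub_distrib]; rfl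
      rw [this, map_sum, Finset.mul_sum]
      exact (norm_sum_le _ _).trans (Finset.sum_le_sum fun i _ => hgn i)
    have hiso := TT_isom V hV (f a)
    have h2 : ∑ i, s i ^ 2 ≤ n * (ε * ∑ i, s i)^2 := by
      rw [← hiso]
      calc _ ≤ ∑ l : Fin n, (ε * ∑ i, s i)^2 := Finset.sum_le_sum fun l _ => pow_le_pow_left₀ (norm_nonneg _) (hFn l) 2
        _ = _ := by simp
    have h3 := sq_sum_le_card_mul_sum_sq (s := Finset.univ) (f := s)
    simp only [Finset.card_univ, Fintype.card_fin] at h3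
    have h4 : (n * ε)^2 ≤ 1/4 := by
      have : n * ε ≤ 1/2 := by
        rw [hε, mul_one_div, div_le_div_iff₀ (by positivity) (by norm_num)]; linarith
      have h0 : 0 ≤ n * ε := by positivity
      nlinarith
    have h5 : ∑ i, s i ^ 2 ≤ 0 := by
      have h6 : 0 ≤ ∑ i, s i ^ 2 := by positivity
      have h7 : n * ε^2 * (∑ i, s i)^2 ≤ n * ε^2 * (n * ∑ i, s i ^ 2) := mul_le_mul_of_nonneg_left h3 (by positivity)
      have h8 := mul_le_mul_of_nonneg_right h4 h6
      nlinarith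
    have hs0 : ∀ i, s i = 0 := by
      intro i
      have := (Finset.sum_eq_zero_iff_of_nonneg (f := fun i => s i ^ 2) (fun i _ => sq_nonneg _)).mp (le_antisymm h5 (by positivity)) i (Finset.mem_univ i)
      exact pow_eq_zero_iff (by norm_num) |>.mp this
    funext ⟨i, α⟩
    have h9 : ‖TT (f a i)‖^2 = ∑ α : PP (k - p i).toNat, ‖a ⟨i, α⟩‖^2 * ‖TT (mono α.1)‖^2 := by
      rw [← pyth (v := fun α : PP (k - p i).toNat => TT (mono α.1))]
      · simp [f, map_sum]
      · intro α β hab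
        apply orthW (mono_W α.1) (mono_W β.1)
        intro h; apply hab; apply Subtype.ext; funext i
        have := congrFun h i
        exact_mod_cast this
    have h10 : ‖TT (f a i)‖ = 0 := hs0 i
    rw [h10] at h9
    have h11 := (Finset.sum_eq_zero_iff_of_nonneg (f := fun α : PP (k - p i).toNat => ‖a ⟨i, α⟩‖^2 * ‖TT (mono α.1)‖^2) (fun i _ => by positivity)).mp (by rw [← h9]; simp) α (Finset.mem_univ α)
    simp only [mono_norm] at h11
    have := NN_pos α.1
    rcases mul_eq_zero.mp h11 with h | h
    · simpa using h
    · exact absurd h this.ne'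
  have := LinearMap.finrank_le_finrank_of_injective hinj
  simpa using this

theorem thmQ {n : ℕ} (V : Fin n → Fin n → C(S5, ℂ))
    (hV : ∀ z i j, ∑ l, (starRingEnd ℂ) (V l i z) * V l j z = if i = j then 1 else 0)
    (c : Fin n → ℤ) (hC : ∀ l i, HasC (V l i) (c i)) : ∀ i, c i = 0 := by
  obtain ⟨K1, h1⟩ := dimcount V hV c 0 (by simpa using hC)
  obtain ⟨K2, h2⟩ := dimcount (fun l i => star (V i l)) (by
    intro z i j
    let M : Matrix (Fin n) (Fin n) ℂ := fun l i => V l i z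
    have : Mᴴ * M = 1 := by
      ext i j
      rw [Matrix.mul_apply, Matrix.one_apply, ← hV z i j]
      rfl
    have h2 : M * Mᴴ = 1 := mul_eq_one_comm.mp this
    have h3 := congrFun (congrFun h2 i) j
    rw [Matrix.mul_apply, Matrix.one_apply] at h3
    rw [← h3]
    apply Finset.sum_congr rfl
    intro l _
    show (starRingEnd ℂ) ((starRingEnd ℂ) (V i l z)) * (starRingEnd ℂ) (V j l z) = V i l z * (starRingEnd ℂ) (V j l z)
    rw [Complex.conj_conj]) 0 c (by
    intro l i ζ z
    rw [ContinuousMap.star_apply, hC i l ζ z, ContinuousMap.star_apply, star_mul]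
    have := circ_conj ζ 0 (c l)
    simp only [zpow_zero, one_mul] at this
    have e : star ((ζ:ℂ) ^ c l) = (ζ:ℂ) ^ (0 - c l) := this
    rw [e, mul_comm]; rfl)
  obtain ⟨B, hB⟩ : ∃ B : ℤ, ∀ i, c i ≤ B := by
    obtain ⟨P, hP⟩ := (Set.finite_range c).bddAbove
    exact ⟨P, fun i => hP ⟨i, rfl⟩⟩
  have key : ∀ k : ℤ, K1 ≤ k → K2 ≤ k → B ≤ k → 0 ≤ k → ∑ i, (k - c i + 1) * (k - c i + 2) = ∑ i : Fin n, (k + 1) * (k + 2) := by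
    intro k a1 a2 a3 a4
    have e := le_antisymm (h1 k a1) (h2 k a2)
    have e2 : ((2 * ∑ i, (PP (k - c i).toNat).card : ℕ) : ℤ) = ((2 * ∑ l, (PP (k - (0 : Fin n → ℤ) l).toNat).card : ℕ) : ℤ) := by rw [e]
    rw [Finset.mul_sum, Finset.mul_sum] at e2
    simp_rw [card_PP] at e2
    push_cast at e2
    simp only [Pi.zero_apply, sub_zero, Int.ofNat_toNat, max_eq_left a4] at e2
    rw [← e2]
    apply Finset.sum_congr rfl
    intro i _
    rw [max_eq_left (by have := hB i; omega)]
  set k := max (max K1 K2) (max B 0)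
  have b1 : K1 ≤ k := by omega
  have b2 : K2 ≤ k := by omega
  have b3 : B ≤ k := by omega
  have b4 : 0 ≤ k := by omega
  have e1 := key k b1 b2 b3 b4
  have e2 := key (k+1) (by omega) (by omega) (by omega) (by omega)
  have f1 : ∀ k : ℤ, ∑ i, (k - c i + 1) * (k - c i + 2) = ∑ i : Fin n, (k + 1) * (k + 2) - (2 * k + 3) * ∑ i, c i + ∑ i, c i ^ 2 := by
    intro k
    rw [Finset.mul_sum, ← Finset.sum_sub_distrib, ← Finset.sum_add_distrib]
    apply Finset.sum_congr rfl; intro i _; ring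
  rw [f1] at e1 e2
  have g1 : ∑ i, c i = 0 := by linarith
  have g2 : ∑ i, c i ^ 2 = 0 := by rw [g1] at e1; linarith
  intro i
  have := (Finset.sum_eq_zero_iff_of_nonneg (f := fun i => c i ^ 2) (fun i _ => sq_nonneg _)).mp g2 i (Finset.mem_univ i)
  exact pow_eq_zero_iff (by norm_num) |>.mp this

end


def Eig {n : ℕ} (T : EuclideanSpace ℂ (Fin n) →L[ℂ] EuclideanSpace ℂ (Fin n)) (v : EuclideanSpace ℂ (Fin n)) : Prop :=
  ‖v‖ = 1 ∧ T v = inner ℂ v (T v) • v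

def Dg {n : ℕ} (T : EuclideanSpace ℂ (Fin n) →L[ℂ] EuclideanSpace ℂ (Fin n)) : Prop :=
  ∃ (b : OrthonormalBasis (Fin n) ℂ (EuclideanSpace ℂ (Fin n))) (μ : Fin n → ℂ), Function.Injective μ ∧ ∀ i, T (b i) = μ i • b i

lemma onb_of {n : ℕ} {v : Fin n → EuclideanSpace ℂ (Fin n)} (hv : Orthonormal ℂ v) :
    ∃ b : OrthonormalBasis (Fin n) ℂ (EuclideanSpace ℂ (Fin n)), ∀ i, b i = v i := by
  have hs : Submodule.span ℂ (Set.range v) = ⊤ :=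
    hv.linearIndependent.span_eq_top_of_card_eq_finrank' (by simp)
  exact ⟨OrthonormalBasis.mk hv hs.ge, fun i => by simp⟩

open scoped ComplexOrder in
lemma Dg_of_matrix {n : ℕ} (B : Matrix (Fin n) (Fin n) ℂ) (hB : B * Bᴴ = Bᴴ * B)
    (hmf : ∃ μ : Fin n → ℂ, Function.Injective μ ∧
      ∀ t : ℂ, (t • (1 : Matrix (Fin n) (Fin n) ℂ) - B).det = ∏ i, (t - μ i)) :
    Dg (toEuclideanCLM (𝕜 := ℂ) B) := by
  obtain ⟨μ, hμ, hdet⟩ := hmf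
  set T := toEuclideanCLM (𝕜 := ℂ) B with hT
  have hTn : IsStarNormal T := by
    constructor
    show star T * T = T * star T
    rw [hT, ← map_star, ← map_mul, ← map_mul]
    congr 1
    exact hB.symm
  have h1 : ∀ i, ∃ v : EuclideanSpace ℂ (Fin n), ‖v‖ = 1 ∧ T v = μ i • v := by
    intro i
    have : (μ i • (1 : Matrix (Fin n) (Fin n) ℂ) - B).det = 0 := by
      rw [hdet]; exact Finset.prod_eq_zero (Finset.mem_univ i) (sub_self _)
    obtain ⟨v, hv, hv2⟩ := Matrix.exists_mulVec_eq_zero_iff.mpr this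
    rw [Matrix.sub_mulVec, Matrix.smul_mulVec, Matrix.one_mulVec, sub_eq_zero] at hv2
    have hw : WithLp.toLp 2 v ≠ 0 := by
      intro h; apply hv; simpa using h
    have e : T (WithLp.toLp 2 v) = μ i • WithLp.toLp 2 v := by
      rw [hT, toEuclideanCLM_toLp, ← hv2]; rfl
    refine ⟨((‖WithLp.toLp 2 v‖⁻¹ : ℝ) : ℂ) • WithLp.toLp 2 v, ?_, ?_⟩
    · rw [norm_smul, Complex.norm_real, norm_inv, norm_norm]
      exact inv_mul_cancel₀ (norm_ne_zero_iff.mpr hw)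
    · rw [map_smul, e, smul_comm]
  choose v hv hTv using h1
  have hadj : ∀ i, ContinuousLinearMap.adjoint T (v i) = (starRingEnd ℂ) (μ i) • v i := by
    intro i
    set N : Matrix (Fin n) (Fin n) ℂ := B - μ i • 1 with hN
    have hNs : Nᴴ = Bᴴ - (starRingEnd ℂ) (μ i) • 1 := by
      rw [hN, conjTranspose_sub, conjTranspose_smul, conjTranspose_one]; rfl
    have hNn : N * Nᴴ = Nᴴ * N := by
      rw [hNs, hN]
      simp only [sub_mul, mul_sub, hB, smul_mul_assoc, mul_smul_comm, one_mul, mul_one]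
      rw [smul_sub, smul_sub, smul_comm]; abel
    have h0 : N *ᵥ (v i).ofLp = 0 := by
      have := congrArg WithLp.ofLp (hTv i)
      rw [hT, ofLp_toEuclideanCLM] at this
      rw [hN, Matrix.sub_mulVec, Matrix.smul_mulVec, Matrix.one_mulVec, this]; simp
    have h2 : Nᴴ *ᵥ (v i).ofLp = 0 := by
      rw [← Matrix.self_mul_conjTranspose_mulVec_eq_zero, hNn, ← Matrix.mulVec_mulVec, h0, Matrix.mulVec_zero]
    rw [hNs, Matrix.sub_mulVec, Matrix.smul_mulVec, Matrix.one_mulVec, sub_eq_zero] at h2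
    rw [← ContinuousLinearMap.star_eq_adjoint, hT, ← map_star]
    apply WithLp.ofLp_injective 2
    rw [ofLp_toEuclideanCLM]
    exact h2
  have hon : Orthonormal ℂ v := by
    refine ⟨hv, fun i j hij => ?_⟩
    have h3 : inner ℂ (ContinuousLinearMap.adjoint T (v i)) (v j) = inner ℂ (v i) (T (v j)) :=
      ContinuousLinearMap.adjoint_inner_left T (v j) (v i)
    rw [hadj, hTv, inner_smul_left, inner_smul_right, Complex.conj_conj] at h3
    have h4 : (μ i - μ j) * inner ℂ (v i) (v j) = 0 := by linear_combination h3
    rcases mul_eq_zero.mp h4 with h | h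
    · exact absurd (hμ (sub_eq_zero.mp h)) hij
    · exact h
  obtain ⟨b, hb⟩ := onb_of hon
  exact ⟨b, μ, hμ, fun i => by rw [hb, hTv]⟩

lemma Dg.eig {n : ℕ} {T : EuclideanSpace ℂ (Fin n) →L[ℂ] EuclideanSpace ℂ (Fin n)} (h : Dg T) :
    ∃ b : OrthonormalBasis (Fin n) ℂ (EuclideanSpace ℂ (Fin n)), ∀ i, Eig T (b i) := by
  obtain ⟨b, μ, -, hb⟩ := h
  refine ⟨b, fun i => ⟨b.norm_eq_one i, ?_⟩⟩
  rw [hb, inner_smul_right, inner_self_eq_norm_sq_to_K, b.norm_eq_one]; simp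

lemma Eig.exists {n : ℕ} {T : EuclideanSpace ℂ (Fin n) →L[ℂ] EuclideanSpace ℂ (Fin n)} 
    {b : OrthonormalBasis (Fin n) ℂ (EuclideanSpace ℂ (Fin n))} {μ : Fin n → ℂ} (hμ : Function.Injective μ)
    (hb : ∀ i, T (b i) = μ i • b i) {v : EuclideanSpace ℂ (Fin n)} (hv : Eig T v) :
    ∃ i, ∃ c : ℂ, ‖c‖ = 1 ∧ v = c • b i := by
  obtain ⟨hv1, hv2⟩ := hv
  set a := inner ℂ v (T v)
  have h1 : ∀ j, inner ℂ (b j) (T v) = μ j * inner ℂ (b j) v := by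
    intro j
    conv_lhs => rw [← b.sum_repr' v, map_sum, inner_sum]
    simp_rw [map_smul, hb, inner_smul_right]
    rw [Finset.sum_eq_single j]
    · rw [inner_self_eq_norm_sq_to_K, b.norm_eq_one]; simp; ring
    · intro k _ hk
      rw [b.orthonormal.2 (Ne.symm hk)]; simp
    · simp
  have h2 : ∀ j, (μ j - a) * inner ℂ (b j) v = 0 := by
    intro j
    have := h1 j
    rw [hv2, inner_smul_right] at this
    linear_combination -this
  obtain ⟨i, hi⟩ : ∃ i, inner ℂ (b i) v ≠ 0 := by
    by_contra! hc
    have := b.sum_repr' v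
    simp [hc] at this
    rw [← this] at hv1; simp at hv1
  have h3 : ∀ j, j ≠ i → inner ℂ (b j) v = 0 := by
    intro j hj
    have e1 := (mul_eq_zero.mp (h2 i)).resolve_right hi
    rcases mul_eq_zero.mp (h2 j) with h | h
    · exact absurd (hμ (by linear_combination h - e1)) hj
    · exact h
  have h4 : v = inner ℂ (b i) v • b i := by
    conv_lhs => rw [← b.sum_repr' v]
    rw [Finset.sum_eq_single i]
    · intro j _ hj; rw [h3 j hj, zero_smul]
    · simp
  refine ⟨i, _, ?_, h4⟩
  have := congrArg norm h4
  rw [norm_smul, b.norm_eq_one, hv1] at this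
  simpa using this.symm

lemma Eig.par {n : ℕ} {T : EuclideanSpace ℂ (Fin n) →L[ℂ] EuclideanSpace ℂ (Fin n)} (hT : Dg T)
    {v w : EuclideanSpace ℂ (Fin n)} (hv : Eig T v) (hw : Eig T w) (h : inner ℂ v w ≠ 0) :
    ‖inner ℂ v w‖ = 1 ∧ w = inner ℂ v w • v := by
  obtain ⟨b, μ, hμ, hb⟩ := hT
  obtain ⟨i, c, hc, rfl⟩ := hv.exists hμ hb
  obtain ⟨j, d, hd, rfl⟩ := hw.exists hμ hb
  have hij : i = j := by
    by_contra hij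
    apply h
    rw [inner_smul_left, inner_smul_right, b.orthonormal.2 hij]; simp
  subst hij
  have e : inner ℂ (c • b i) (d • b i) = (starRingEnd ℂ) c * d := by
    rw [inner_smul_left, inner_smul_right, inner_self_eq_norm_sq_to_K, b.norm_eq_one]; simp
  rw [e]
  refine ⟨by rw [norm_mul, RCLike.norm_conj, hc, hd, one_mul], ?_⟩
  rw [smul_smul]
  have : (starRingEnd ℂ) c * c = 1 := by rw [mul_comm, Complex.mul_conj, Complex.normSq_eq_norm_sq, hc]; simp
  rw [show (starRingEnd ℂ) c * d * c = ((starRingEnd ℂ) c * c) * d by ring, this, one_mul]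

lemma Eig.smul {n : ℕ} {T : EuclideanSpace ℂ (Fin n) →L[ℂ] EuclideanSpace ℂ (Fin n)} 
    {v : EuclideanSpace ℂ (Fin n)} (hv : Eig T v) {c : ℂ} (hc : ‖c‖ = 1) : Eig T (c • v) := by
  refine ⟨by rw [norm_smul, hc, hv.1, one_mul], ?_⟩
  have : (starRingEnd ℂ) c * c = 1 := by rw [mul_comm, Complex.mul_conj, Complex.normSq_eq_norm_sq, hc]; simp
  have h2 := hv.2
  set a := inner ℂ v (T v) with ha
  rw [map_smul, inner_smul_left, inner_smul_right, ← ha, h2, smul_smul, smul_smul]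
  congr 1
  linear_combination (-a * c) * this

lemma bessel2 {n : ℕ} {x v w : EuclideanSpace ℂ (Fin n)} (hv : ‖v‖ = 1) (hw : ‖w‖ = 1) (hx : ‖x‖ = 1) (h : inner ℂ v w = 0)
    (h1 : (8/10 : ℝ) ≤ ‖inner ℂ v x‖) (h2 : (8/10 : ℝ) ≤ ‖inner ℂ w x‖) : False := by
  have hon : Orthonormal ℂ ![v, w] := by
    constructor
    · intro i; fin_cases i <;> simp [hv, hw]
    · intro i j hij
      fin_cases i <;> fin_cases j <;> simp_all [inner_eq_zero_symm]
  have := hon.sum_inner_products_le x (s := Finset.univ)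
  simp [Fin.sum_univ_two, hx] at this
  nlinarith


lemma cont_of_graph {X Y : Type*} [TopologicalSpace X] [TopologicalSpace Y] [CompactSpace Y] (f : X → Y)
    (h : IsClosed {p : X × Y | p.2 = f p.1}) : Continuous f := by
  rw [continuous_iff_isClosed]
  intro C hC
  have : f ⁻¹' C = Prod.fst '' ({p : X × Y | p.2 = f p.1} ∩ Prod.snd ⁻¹' C) := by
    ext x
    constructor
    · intro hx; exact ⟨(x, f x), ⟨rfl, hx⟩, rfl⟩
    · rintro ⟨⟨a, b⟩, ⟨h1, h2⟩, rfl⟩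
      simp only [Set.mem_ofPred_eq] at h1
      subst h1; exact h2
  rw [this]
  exact isClosedMap_fst_of_compactSpace _ (h.inter (hC.preimage continuous_snd))

structure Frame {n : ℕ} {X : Type*} [TopologicalSpace X] (L : X → EuclideanSpace ℂ (Fin n) →L[ℂ] EuclideanSpace ℂ (Fin n))
    (v : Fin n → X → EuclideanSpace ℂ (Fin n)) : Prop where
  cont : ∀ i, Continuous (v i)
  orth : ∀ x, Orthonormal ℂ (fun i => v i x)
  eig : ∀ i x, Eig (L x) (v i x)

lemma frame_step {n : ℕ} {X : Type*} [TopologicalSpace X]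
    {L0 L1 : X → EuclideanSpace ℂ (Fin n) →L[ℂ] EuclideanSpace ℂ (Fin n)}
    (hc : Continuous L1) (hd : ∀ x, Dg (L1 x))
    (H : ∀ x v, Eig (L0 x) v → ∃ w, Eig (L1 x) w ∧ 8/10 ≤ ‖inner ℂ w v‖)
    {v : Fin n → X → EuclideanSpace ℂ (Fin n)} (hv : Frame L0 v) : ∃ w, Frame L1 w := by
  have h1 : ∀ i x, ∃ w : Metric.sphere (0 : EuclideanSpace ℂ (Fin n)) 1, Eig (L1 x) w ∧ 8/10 ≤ (inner ℂ (w : EuclideanSpace ℂ (Fin n)) (v i x)).re ∧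
      (inner ℂ (w : EuclideanSpace ℂ (Fin n)) (v i x)).im = 0 := by
    intro i x
    obtain ⟨w, hw, hw2⟩ := H x _ (hv.eig i x)
    set a := inner ℂ w (v i x) with ha
    have hapos : 0 < ‖a‖ := by linarith
    have ha0 : a ≠ 0 := norm_pos_iff.mp hapos
    have hac : ((‖a‖:ℝ):ℂ) ≠ 0 := by exact_mod_cast hapos.ne'
    have hn : ‖a / ‖a‖‖ = 1 := by
      rw [norm_div, Complex.norm_real, norm_norm]; exact div_self hapos.ne'
    have he := hw.smul hn
    have e : inner ℂ ((a / ‖a‖) • w) (v i x) = (‖a‖ : ℂ) := by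
      rw [inner_smul_left, ← ha, map_div₀, Complex.conj_ofReal, div_mul_eq_mul_div, mul_comm, Complex.mul_conj, Complex.normSq_eq_norm_sq]
      push_cast
      field_simp
    refine ⟨⟨(a / ‖a‖) • w, by simpa using he.1⟩, he, ?_, ?_⟩
    · show _ ≤ (inner ℂ ((a / ‖a‖) • w) (v i x)).re
      rw [e]; simpa using hw2
    · show (inner ℂ ((a / ‖a‖) • w) (v i x)).im = 0
      rw [e]; simp
  choose w hw1 hw2 hw3 using h1
  have hnorm : ∀ i x, 8/10 ≤ ‖inner ℂ (w i x : EuclideanSpace ℂ (Fin n)) (v i x)‖ := fun i x =>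
    (hw2 i x).trans (Complex.re_le_norm _)
  have huniq : ∀ i x (u : Metric.sphere (0 : EuclideanSpace ℂ (Fin n)) 1), (Eig (L1 x) u ∧ 8/10 ≤ (inner ℂ (u : EuclideanSpace ℂ (Fin n)) (v i x)).re ∧
      (inner ℂ (u : EuclideanSpace ℂ (Fin n)) (v i x)).im = 0) → u = w i x := by
    intro i x u ⟨a1, a2, a3⟩
    by_cases h : inner ℂ (w i x : EuclideanSpace ℂ (Fin n)) (u : EuclideanSpace ℂ (Fin n)) = 0
    · exact (bessel2 (hw1 i x).1 a1.1 (hv.eig i x).1 h (hnorm i x) (a2.trans (Complex.re_le_norm _))).elim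
    · obtain ⟨b1, b2⟩ := Eig.par (hd x) (hw1 i x) a1 h
      set c := inner ℂ (w i x : EuclideanSpace ℂ (Fin n)) (u : EuclideanSpace ℂ (Fin n)) with hc
      have e : inner ℂ (u : EuclideanSpace ℂ (Fin n)) (v i x) = (starRingEnd ℂ) c * inner ℂ (w i x : EuclideanSpace ℂ (Fin n)) (v i x) := by
        conv_lhs => rw [b2, inner_smul_left]
      set p := inner ℂ (u : EuclideanSpace ℂ (Fin n)) (v i x)
      have hq2 := hw2 i x
      have hq3 := hw3 i x
      set q := inner ℂ (w i x : EuclideanSpace ℂ (Fin n)) (v i x)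
      have hp' : p = (p.re : ℂ) := Complex.ext (by simp) (by simpa using a3)
      have hq' : q = (q.re : ℂ) := Complex.ext (by simp) (by simpa using hq3)
      have hnpq : p.re = q.re := by
        have := congrArg norm e
        rw [norm_mul, RCLike.norm_conj, b1, one_mul, hp', hq', Complex.norm_real, Complex.norm_real, Real.norm_of_nonneg (by linarith), Real.norm_of_nonneg (by linarith)] at this
        exact this
      have hpq : p = q := by rw [hp', hq', hnpq]
      have hq0 : q ≠ 0 := by
        intro h0; rw [h0] at hq2; norm_num at hq2
      have hc1 : (starRingEnd ℂ) c = 1 := by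
        rw [hpq] at e
        exact mul_right_cancel₀ hq0 (by rw [one_mul]; exact e.symm)
      have hc2 : c = 1 := by
        have := congrArg (starRingEnd ℂ) hc1
        simpa using this
      apply Subtype.ext
      rw [b2, hc2, one_smul]
  refine ⟨fun i x => w i x, ?_, ?_, hw1⟩
  · intro i
    apply continuous_subtype_val.comp
    apply cont_of_graph
    have hvc := hv.cont i
    have : {p : X × Metric.sphere (0 : EuclideanSpace ℂ (Fin n)) 1 | p.2 = w i p.1} =
      {p | (L1 p.1) p.2.1 = inner ℂ p.2.1 (L1 p.1 p.2.1) • p.2.1 ∧ 8/10 ≤ (inner ℂ p.2.1 (v i p.1)).re ∧ (inner ℂ p.2.1 (v i p.1)).im = 0} := by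
      ext ⟨x, u⟩
      simp only [Set.mem_ofPred_eq]
      constructor
      · rintro rfl; exact ⟨(hw1 i x).2, hw2 i x, hw3 i x⟩
      · rintro ⟨a1, a2, a3⟩
        exact huniq i x u ⟨⟨by simpa using u.2, a1⟩, a2, a3⟩
    rw [this]
    have c1 : Continuous fun p : X × Metric.sphere (0 : EuclideanSpace ℂ (Fin n)) 1 => L1 p.1 p.2.1 := by fun_prop
    have c2 : Continuous fun p : X × Metric.sphere (0 : EuclideanSpace ℂ (Fin n)) 1 => inner ℂ p.2.1 (v i p.1) := by fun_prop
    refine (isClosed_eq c1 (by fun_prop)).inter ((isClosed_le continuous_const (Complex.continuous_re.comp c2)).inter (isClosed_eq (Complex.continuous_im.comp c2) continuous_const))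
  · intro x
    refine ⟨fun i => (hw1 i x).1, fun i j hij => ?_⟩
    by_contra h
    obtain ⟨b1, b2⟩ := Eig.par (hd x) (hw1 i x) (hw1 j x) h
    have h2 := hnorm j x
    rw [b2, inner_smul_left, norm_mul, RCLike.norm_conj, b1, one_mul] at h2
    have h3 := hnorm i x
    rw [norm_inner_symm] at h2 h3
    exact bessel2 (hv.eig i x).1 (hv.eig j x).1 (hw1 i x).1 ((hv.orth x).2 hij) h3 h2

lemma isClosed_all {X ι : Type*} [TopologicalSpace X] {P : ι → X → Prop} (h : ∀ i, IsClosed {p | P i p}) :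
    IsClosed {p | ∀ i, P i p} := by
  rw [Set.ofPred_forall]; exact isClosed_iInter h

lemma unif_step {n : ℕ} {X : Type*} [TopologicalSpace X] [CompactSpace X]
    (L : unitInterval × X → EuclideanSpace ℂ (Fin n) →L[ℂ] EuclideanSpace ℂ (Fin n))
    (hc : Continuous L) (hd : ∀ x, Dg (L x)) :
    ∃ δ > 0, ∀ (t t' : unitInterval), dist t t' < δ → ∀ x v, Eig (L (t, x)) v → ∃ w, Eig (L (t', x)) w ∧ 8/10 ≤ ‖inner ℂ w v‖ := by
  let S := Metric.sphere (0 : EuclideanSpace ℂ (Fin n)) 1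
  let Z : Set (X × unitInterval × unitInterval × S × (Fin n → S)) := {p |
    L (p.2.1, p.1) p.2.2.2.1.1 = inner ℂ p.2.2.2.1.1 (L (p.2.1, p.1) p.2.2.2.1.1) • p.2.2.2.1.1 ∧
    (∀ i, L (p.2.2.1, p.1) (p.2.2.2.2 i).1 = inner ℂ (p.2.2.2.2 i).1 (L (p.2.2.1, p.1) (p.2.2.2.2 i).1) • (p.2.2.2.2 i).1) ∧
    (∀ i j, i ≠ j → inner ℂ (p.2.2.2.2 i).1 (p.2.2.2.2 j).1 = 0) ∧
    ∀ i, ‖inner ℂ (p.2.2.2.2 i).1 p.2.2.2.1.1‖ ≤ 8/10 }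
  have hZ : IsCompact Z := by
    apply IsClosed.isCompact
    refine (isClosed_eq (by fun_prop) (by fun_prop)).inter (IsClosed.inter ?_ (IsClosed.inter ?_ ?_))
    · have : ∀ i, IsClosed {p : X × unitInterval × unitInterval × S × (Fin n → S) | L (p.2.2.1, p.1) (p.2.2.2.2 i).1 = inner ℂ (p.2.2.2.2 i).1 (L (p.2.2.1, p.1) (p.2.2.2.2 i).1) • (p.2.2.2.2 i).1} := by
        intro i
        exact isClosed_eq (by fun_prop) (by fun_prop)
      exact isClosed_all this
    · have : ∀ i j, IsClosed {p : X × unitInterval × unitInterval × S × (Fin n → S) | i ≠ j → inner ℂ (p.2.2.2.2 i).1 (p.2.2.2.2 j).1 = 0} := by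
        intro i j
        by_cases h : i = j
        · simp [h]
        · simp only [ne_eq, h, not_false_eq_true, forall_const]
          exact isClosed_eq (by fun_prop) (by fun_prop)
      exact isClosed_all fun i => isClosed_all (this i)
    · have : ∀ i, IsClosed {p : X × unitInterval × unitInterval × S × (Fin n → S) | ‖inner ℂ (p.2.2.2.2 i).1 p.2.2.2.1.1‖ ≤ 8/10} := by
        intro i
        exact isClosed_le (by fun_prop) (by fun_prop)
      exact isClosed_all this
  have hfin : ∀ δ > 0, (∀ p ∈ Z, δ ≤ dist p.2.1 p.2.2.1) → ∀ (t t' : unitInterval), dist t t' < δ → ∀ x v, Eig (L (t, x)) v → ∃ w, Eig (L (t', x)) w ∧ 8/10 ≤ ‖inner ℂ w v‖ := by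
    intro δ hδ h t t' ht x v hv
    obtain ⟨b, hb⟩ := (hd (t', x)).eig
    by_contra! hcon
    have := h (x, t, t', ⟨v, mem_sphere_zero_iff_norm.mpr hv.1⟩, fun i => ⟨b i, mem_sphere_zero_iff_norm.mpr (b.norm_eq_one i)⟩) 
      ⟨hv.2, fun i => (hb i).2, fun i j hij => b.orthonormal.2 hij, fun i => (hcon _ (hb i)).le⟩
    exact absurd ht (not_lt.mpr this)
  by_cases hne : Z.Nonempty
  · obtain ⟨p, hp, hmin⟩ := hZ.exists_isMinOn hne (f := fun p => dist p.2.1 p.2.2.1) (by fun_prop)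
    refine ⟨dist p.2.1 p.2.2.1, ?_, hfin _ ?_ fun q hq => hmin hq⟩
    all_goals
      rcases (dist_nonneg (x := p.2.1) (y := p.2.2.1)).lt_or_eq with h | h
      · exact h
      · exfalso
        obtain ⟨x, t, t', v, W⟩ := p
        obtain ⟨h1, h2, h3, h4⟩ := hp
        have htt : t = t' := dist_eq_zero.mp h.symm
        subst htt
        obtain ⟨b, hb⟩ := onb_of (v := fun i => (W i).1) ⟨fun i => by simpa using (W i).2, fun i j hij => h3 i j hij⟩
        have hv1 : ‖v.1‖ = 1 := by simpa using v.2
        obtain ⟨i, hi⟩ : ∃ i, inner ℂ (W i).1 v.1 ≠ 0 := by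
          by_contra! hcon
          have := b.sum_repr' v.1
          simp only [hb, hcon, zero_smul, Finset.sum_const_zero] at this
          rw [← this] at hv1; simp at hv1
        have hw : Eig (L (t, x)) (W i).1 := ⟨by simpa using (W i).2, h2 i⟩
        have hv : Eig (L (t, x)) v.1 := ⟨hv1, h1⟩
        have := (Eig.par (hd _) hw hv hi).1
        have h5 := h4 i
        simp only at h5
        rw [this] at h5
        norm_num at h5
  · refine ⟨1, one_pos, hfin 1 one_pos fun p hp => (hne ⟨p, hp⟩).elim⟩

lemma frame_homotopy {n : ℕ} {X : Type*} [TopologicalSpace X] [CompactSpace X]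
    (L : unitInterval × X → EuclideanSpace ℂ (Fin n) →L[ℂ] EuclideanSpace ℂ (Fin n))
    (hc : Continuous L) (hd : ∀ x, Dg (L x)) (h0 : ∃ v, Frame (fun x => L (0, x)) v) :
    ∃ v, Frame (fun x => L (1, x)) v := by
  obtain ⟨δ, hδ, hstep⟩ := unif_step L hc hd
  obtain ⟨N, hN⟩ := exists_nat_one_div_lt hδ
  let τ : ℕ → unitInterval := fun k => Set.projIcc 0 1 zero_le_one ((k:ℝ) / (N + 1))
  have hτ : ∀ k, dist (τ k) (τ (k+1)) < δ := by
    intro k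
    have h1 : dist (τ k) (τ (k+1)) ≤ dist ((k:ℝ) / (N + 1)) (((k+1:ℕ):ℝ) / (N + 1)) := by
      have := (LipschitzWith.projIcc (zero_le_one (α := ℝ))).dist_le_mul ((k:ℝ) / (N + 1)) (((k+1:ℕ):ℝ) / (N + 1))
      rw [NNReal.coe_one, one_mul] at this
      exact this
    refine h1.trans_lt ?_
    rw [Real.dist_eq]
    have : (k:ℝ) / (N + 1) - ((k+1:ℕ):ℝ) / (N + 1) = -(1 / (N+1)) := by push_cast; ring
    rw [this, abs_neg, abs_of_pos (by positivity)]
    exact hN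
  have hall : ∀ k, ∃ v, Frame (fun x => L (τ k, x)) v := by
    intro k
    induction k with
    | zero => 
      have : τ 0 = 0 := by simp [τ]
      rw [this]; exact h0
    | succ k ih =>
      obtain ⟨v, hv⟩ := ih
      exact frame_step (by fun_prop) (fun x => hd _) (fun x v hv => hstep _ _ (hτ k) x v hv) hv
  have h1 : τ (N+1) = 1 := by
    have : (((N+1:ℕ):ℝ) / (N + 1)) = 1 := by push_cast; field_simp
    simp only [τ, this]; simp
  rw [← h1]; exact hall _

lemma frame_ball {n : ℕ} {F : Type*} [NormedAddCommGroup F] [NormedSpace ℝ F] [ProperSpace F]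
    (L : Metric.closedBall (0:F) 1 → EuclideanSpace ℂ (Fin n) →L[ℂ] EuclideanSpace ℂ (Fin n))
    (hc : Continuous L) (hd : ∀ x, Dg (L x)) : ∃ v, Frame L v := by
  let s : unitInterval × Metric.closedBall (0:F) 1 → Metric.closedBall (0:F) 1 := fun p => ⟨p.1.1 • p.2.1, by
    have h1 := p.1.2
    have h2 : ‖p.2.1‖ ≤ 1 := mem_closedBall_zero_iff.mp p.2.2
    rw [mem_closedBall_zero_iff, norm_smul, Real.norm_of_nonneg h1.1]
    nlinarith [h1.1, h1.2, norm_nonneg p.2.1]⟩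
  have hs : Continuous s := by
    apply Continuous.subtype_mk; fun_prop
  haveI : CompactSpace (Metric.closedBall (0:F) 1) := isCompact_iff_compactSpace.mp (isCompact_closedBall _ _)
  have := frame_homotopy (fun p => L (s p)) (hc.comp hs) (fun x => hd _) (by
    obtain ⟨b, hb⟩ := (hd ⟨0, by simp⟩).eig
    refine ⟨fun i _ => b i, fun i => continuous_const, fun x => b.orthonormal, fun i x => ?_⟩
    have : s (0, x) = ⟨0, by simp⟩ := by apply Subtype.ext; simp [s]
    simp only [this]; exact hb i)
  have h2 : ∀ x, s (1, x) = x := fun x => by apply Subtype.ext; simp [s]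
  simpa only [h2] using this


lemma const2pi {X : Type*} [TopologicalSpace X] {S : Set X} (hS : IsPreconnected S) {f : X → ℝ} (hf : ContinuousOn f S)
    (h : ∀ x ∈ S, Circle.exp (f x) = 1) {x y : X} (hx : x ∈ S) (hy : y ∈ S) : f x = f y := by
  have hd : IsDiscrete ((AddSubgroup.zmultiples (2 * Real.pi) : AddSubgroup ℝ) : Set ℝ) :=
    isDiscrete_iff_discreteTopology.mpr
      (inferInstanceAs (DiscreteTopology (AddSubgroup.zmultiples (2 * Real.pi) : AddSubgroup ℝ)))
  obtain ⟨c, -, hc⟩ := hS.eqOn_const_of_mapsTo hd hf (by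
    intro x hx
    obtain ⟨n, hn⟩ := Circle.exp_eq_one.mp (h x hx)
    rw [hn]
    exact ⟨n, by simp⟩) ⟨0, AddSubgroup.zero_mem _⟩
  rw [hc hx, hc hy]; rfl

lemma circle_param (l : Circle) : ∃ s ∈ Set.Icc (0:ℝ) 1, Circle.exp (2 * Real.pi * s) = l := by
  refine ⟨Int.fract ((l:ℂ).arg / (2 * Real.pi)), ⟨Int.fract_nonneg _, (Int.fract_lt_one _).le⟩, ?_⟩
  conv_rhs => rw [← Circle.exp_arg l]
  rw [Circle.exp_eq_exp]
  refine ⟨-⌊(l:ℂ).arg / (2 * Real.pi)⌋, ?_⟩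
  rw [Int.fract]
  have := Real.pi_pos
  push_cast
  field_simp
  ring

set_option maxHeartbeats 1000000 in
lemma cocycle {A : Type*} [TopologicalSpace A] [PreconnectedSpace A] (act : Circle → A → A)
    (hact : Continuous (fun p : Circle × A => act p.1 p.2)) (hone : ∀ w, act 1 w = w)
    (hmul : ∀ a b w, act (a * b) w = act a (act b w))
    (χ : Circle × A → Circle) (hχ : Continuous χ) (hχ1 : ∀ w, χ (1, w) = 1)
    (hχm : ∀ a b w, χ (a * b, w) = χ (a, act b w) * χ (b, w)) :
    ∃ c : ℤ, ∃ ψ : A → ℝ, Continuous ψ ∧ ∀ l w, χ (l, w) * Circle.exp (ψ (act l w)) = l ^ c * Circle.exp (ψ w) := by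
  let e : ℝ → Circle := fun t => Circle.exp (2 * Real.pi * t)
  have hec : Continuous e := by fun_prop
  have hea : ∀ s t, e (s + t) = e s * e t := fun s t => by simp only [e, mul_add, Circle.exp_add]
  have he0 : e 0 = 1 := by simp [e]
  have he1 : e 1 = 1 := by simp [e]
  obtain ⟨θ, hθc, hθ0, hθe⟩ : ∃ θ : ℝ → A → ℝ, Continuous (fun p : ℝ × A => θ p.1 p.2) ∧ (∀ w, θ 0 w = 0) ∧
      ∀ t w, 0 ≤ t → t ≤ 2 → Circle.exp (θ t w) = χ (e t, w) := by
    let H : C(unitInterval × A, Circle) := ⟨fun p => χ (e (2 * p.1.1), p.2), by fun_prop⟩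
    have H0 : ∀ a, H (0, a) = Circle.exp ((0 : C(A, ℝ)) a) := by
      intro a
      simp [H, he0, hχ1]
    let Ht := Circle.isCoveringMap_exp.liftHomotopy H 0 H0
    have hl : ∀ p, Circle.exp (Ht p) = H p := fun p => congrFun (Circle.isCoveringMap_exp.liftHomotopy_lifts H 0 H0) p
    have hz : ∀ a, Ht (0, a) = 0 := fun a => Circle.isCoveringMap_exp.liftHomotopy_zero H 0 H0 a
    let θ : ℝ → A → ℝ := fun t w => Ht (Set.projIcc 0 1 zero_le_one (t / 2), w)
    have hθc : Continuous (fun p : ℝ × A => θ p.1 p.2) := by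
      have : Continuous (fun p : ℝ × A => ((Set.projIcc 0 1 zero_le_one (p.1 / 2) : unitInterval), p.2)) :=
        (continuous_projIcc.comp (by fun_prop)).prodMk continuous_snd
      exact Ht.continuous.comp this
    have hθ0 : ∀ w, θ 0 w = 0 := by
      intro w
      simp only [θ, zero_div]
      rw [Set.projIcc_left]; exact hz w
    have hθe : ∀ t w, 0 ≤ t → t ≤ 2 → Circle.exp (θ t w) = χ (e t, w) := by
      intro t w h0 h2
      simp only [θ, hl]
      rw [Set.projIcc_of_mem _ (⟨by linarith, by linarith⟩ : t / 2 ∈ Set.Icc (0:ℝ) 1)]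
      simp only [H, ContinuousMap.coe_mk]
      congr 3; ring
    exact ⟨θ, hθc, hθ0, hθe⟩
  have hadd : ∀ s t w, s ∈ Set.Icc (0:ℝ) 1 → t ∈ Set.Icc (0:ℝ) 1 → θ (s + t) w = θ s w + θ t (act (e s) w) := by
    intro s t w hs ht
    have hcont : Continuous (fun t => θ (s + t) w - θ s w - θ t (act (e s) w)) := by
      have c1 : Continuous (fun t => θ (s + t) w) := hθc.comp (f := fun t => (s + t, w)) (by fun_prop)
      have c2 : Continuous (fun t => θ t (act (e s) w)) := hθc.comp (f := fun t => (t, act (e s) w)) (by fun_prop)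
      fun_prop
    have := const2pi (isPreconnected_Icc (a := (0:ℝ)) (b := 1)) hcont.continuousOn (by
      intro t ht
      rw [Circle.exp_sub, Circle.exp_sub, hθe _ _ (by linarith [hs.1, ht.1]) (by linarith [hs.2, ht.2]),
        hθe _ _ hs.1 (by linarith [hs.2]), hθe _ _ ht.1 (by linarith [ht.2]), add_comm s t, hea, hχm]
      simp) ht (y := 0) (by simp)
    simp only [add_zero, hθ0, sub_self] at this
    linarith
  have h1 : ∀ w, Circle.exp (θ 1 w) = 1 := fun w => by rw [hθe 1 w (by norm_num) (by norm_num), he1, hχ1]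
  have hconst : ∀ w w', θ 1 w = θ 1 w' := by
    intro w w'
    have c1 : Continuous (fun w => θ 1 w) := hθc.comp (f := fun w => ((1:ℝ), w)) (by fun_prop)
    exact const2pi isPreconnected_univ c1.continuousOn (fun w _ => h1 w) (Set.mem_univ w) (Set.mem_univ w')
  obtain ⟨c, hc⟩ : ∃ c : ℤ, ∀ w, θ 1 w = c * (2 * Real.pi) := by
    by_cases hA : Nonempty A
    · obtain ⟨w⟩ := hA
      obtain ⟨c, hc⟩ := Circle.exp_eq_one.mp (h1 w)
      exact ⟨c, fun w' => by rw [hconst w' w, hc]⟩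
    · exact ⟨0, fun w => (hA ⟨w⟩).elim⟩
  let ψ : A → ℝ := fun w => ∫ t in (0:ℝ)..1, θ t w
  have hint : ∀ w a b, IntervalIntegrable (fun t => θ t w) MeasureTheory.volume a b := by
    intro w a b
    have c1 : Continuous (fun t => θ t w) := hθc.comp (f := fun t => (t, w)) (by fun_prop)
    exact c1.intervalIntegrable a b
  have hψ : Continuous ψ := by
    apply intervalIntegral.continuous_parametric_intervalIntegral_of_continuous'
    exact hθc.comp (f := fun p : A × ℝ => (p.2, p.1)) (by fun_prop)
  have key : ∀ s w, s ∈ Set.Icc (0:ℝ) 1 → ψ (act (e s) w) = ψ w + s * (c * (2 * Real.pi)) - θ s w := by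
    intro s w hs
    have e1 : ψ (act (e s) w) = ∫ t in (0:ℝ)..1, (θ (s + t) w - θ s w) := by
      apply intervalIntegral.integral_congr
      intro t ht
      rw [Set.uIcc_of_le zero_le_one] at ht
      have := hadd s t w hs ht
      simp only [this]; ring
    have e2 : ∫ t in (0:ℝ)..s, θ (1 + t) w = s * (c * (2 * Real.pi)) + ∫ t in (0:ℝ)..s, θ t w := by
      have : ∫ t in (0:ℝ)..s, θ (1 + t) w = ∫ t in (0:ℝ)..s, (c * (2 * Real.pi) + θ t w) := by
        apply intervalIntegral.integral_congr
        intro t ht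
        rw [Set.uIcc_of_le hs.1] at ht
        have := hadd 1 t w (by simp) ⟨ht.1, ht.2.trans hs.2⟩
        simp only [this]; rw [he1, hone, hc]
      rw [this, intervalIntegral.integral_add (by simp) (hint w _ _)]
      simp
      ring
    rw [intervalIntegral.integral_comp_add_left (fun t => θ t w) 1] at e2
    rw [e1, intervalIntegral.integral_sub _ (by simp), intervalIntegral.integral_comp_add_left (fun t => θ t w) s]
    · have i1 := intervalIntegral.integral_add_adjacent_intervals (hint w 0 s) (hint w s (s+1))
      have i2 := intervalIntegral.integral_add_adjacent_intervals (hint w 0 1) (hint w 1 (1+s))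
      rw [add_comm 1 s] at i2 e2
      simp only [add_zero, intervalIntegral.integral_const, sub_zero, one_smul] at *
      show _ = (∫ t in (0:ℝ)..1, θ t w) + _ - _
      linarith
    · have c1 : Continuous (fun t => θ (s + t) w) := hθc.comp (f := fun t => (s + t, w)) (by fun_prop)
      exact c1.intervalIntegrable _ _
  refine ⟨c, ψ, hψ, fun l w => ?_⟩
  obtain ⟨s, hs, rfl⟩ := circle_param l
  have := key s w hs
  change χ (e s, w) * Circle.exp (ψ (act (e s) w)) = _
  rw [this, ← hθe s w hs.1 (by linarith [hs.2]), ← Circle.exp_add, ← Circle.exp_zsmul, ← Circle.exp_add]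
  congr 1
  simp; ring


lemma frame_norm {m n : ℕ} (hm : 1 ≤ m)
    (L : Metric.closedBall (0 : EuclideanSpace ℂ (Fin m)) 1 → EuclideanSpace ℂ (Fin n) →L[ℂ] EuclideanSpace ℂ (Fin n))
    (hc : Continuous L) (hd : ∀ x, Dg (L x))
    (hL : ∀ (l : Circle) (w w' : Metric.closedBall (0 : EuclideanSpace ℂ (Fin m)) 1), ‖w.1‖ = 1 → w'.1 = (l:ℂ) • w.1 → L w' = L w) :
    ∃ v, Frame L v ∧ ∃ c : Fin n → ℤ, ∀ i (l : Circle) (w w' : Metric.closedBall (0 : EuclideanSpace ℂ (Fin m)) 1),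
      ‖w.1‖ = 1 → w'.1 = (l:ℂ) • w.1 → v i w' = ((l:ℂ) ^ c i) • v i w := by
  obtain ⟨v, hv⟩ := frame_ball L hc hd
  let F := EuclideanSpace ℂ (Fin m)
  haveI : PreconnectedSpace (Metric.sphere (0:F) 1) := by
    rw [← isPreconnected_iff_preconnectedSpace]
    apply isPreconnected_sphere
    have h1 : Module.finrank ℝ F = 2 * m := by
      rw [finrank_real_of_complex]; simp [F]
    rw [← Module.finrank_eq_rank, h1]
    have : 1 < 2 * m := by omega
    exact_mod_cast this
  let inc : Metric.sphere (0:F) 1 → Metric.closedBall (0:F) 1 := fun w => ⟨w.1, Metric.sphere_subset_closedBall w.2⟩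
  have hinc : Continuous inc := by apply Continuous.subtype_mk; fun_prop
  have hince : Topology.IsClosedEmbedding inc := by
    apply hinc.isClosedEmbedding
    intro a b hab
    exact Subtype.ext (congrArg (fun z => z.1) hab)
  let act : Circle → Metric.sphere (0:F) 1 → Metric.sphere (0:F) 1 := fun l w => ⟨(l:ℂ) • w.1, by
    have : ‖w.1‖ = 1 := mem_sphere_zero_iff_norm.mp w.2
    rw [mem_sphere_zero_iff_norm, norm_smul, this, Circle.norm_coe, one_mul]⟩
  have hact : Continuous (fun p : Circle × Metric.sphere (0:F) 1 => act p.1 p.2) := by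
    apply Continuous.subtype_mk
    have : Continuous (fun p : Circle × Metric.sphere (0:F) 1 => (p.1 : ℂ)) := continuous_subtype_val.comp continuous_fst
    fun_prop
  have hone : ∀ w, act 1 w = w := fun w => Subtype.ext (by simp [act])
  have hmul : ∀ a b w, act (a * b) w = act a (act b w) := fun a b w => Subtype.ext (by simp [act, mul_smul])
  have hnorm : ∀ w : Metric.sphere (0:F) 1, ‖(inc w).1‖ = 1 := fun w => mem_sphere_zero_iff_norm.mp w.2
  have hLa : ∀ l w, L (inc (act l w)) = L (inc w) := fun l w => hL l _ _ (hnorm w) rfl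
  have main : ∀ i, ∃ c : ℤ, ∃ ψ : Metric.sphere (0:F) 1 → ℝ, Continuous ψ ∧ ∀ l w,
      ((Circle.exp (ψ (act l w)) : Circle) : ℂ) • v i (inc (act l w)) = ((l:ℂ) ^ c * ((Circle.exp (ψ w) : Circle) : ℂ)) • v i (inc w) := by
    intro i
    have hvc := hv.cont i
    let X : Circle × Metric.sphere (0:F) 1 → ℂ := fun p => inner ℂ (v i (inc p.2)) (v i (inc (act p.1 p.2)))
    have hX : Continuous X := by
      apply Continuous.inner
      · exact hvc.comp (hinc.comp continuous_snd)
      · exact hvc.comp (hinc.comp hact)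
    have hX1 : ∀ w, X (1, w) = 1 := by
      intro w
      simp only [X, hone]
      rw [inner_self_eq_norm_sq_to_K, (hv.eig i _).1]; simp
    have hpar : ∀ l w, X (l, w) ≠ 0 → ‖X (l, w)‖ = 1 ∧ v i (inc (act l w)) = X (l, w) • v i (inc w) := by
      intro l w h
      have h2 := hv.eig i (inc (act l w))
      rw [hLa] at h2
      exact Eig.par (hd _) (hv.eig i (inc w)) h2 h
    have hne : ∀ l w, X (l, w) ≠ 0 := by
      intro l w h0
      have hcl : Continuous (fun l => ‖X (l, w)‖) := (hX.comp (f := fun l => (l, w)) (by fun_prop)).norm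
      obtain ⟨l', hl'⟩ := mem_range_of_exists_le_of_exists_ge (c := (1/2:ℝ)) hcl ⟨l, by simp [h0]⟩ ⟨1, by simp [hX1]; norm_num⟩
      simp only at hl'
      have h3 := (hpar l' w (by intro h; rw [h] at hl'; norm_num at hl')).1
      rw [h3] at hl'; norm_num at hl'
    let χ : Circle × Metric.sphere (0:F) 1 → Circle := fun p => ⟨X p, mem_sphere_zero_iff_norm.2 (hpar p.1 p.2 (hne p.1 p.2)).1⟩
    have hχ : Continuous χ := Continuous.subtype_mk hX _
    have hχX : ∀ p, (χ p : ℂ) = X p := fun p => rfl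
    obtain ⟨c, ψ, hψ, h⟩ := cocycle act hact hone hmul χ hχ (by
      intro w; apply Circle.ext; rw [hχX, hX1]; simp) (by
      intro a b w
      apply Circle.ext
      rw [Circle.coe_mul, hχX, hχX, hχX]
      have e1 := (hpar (a * b) w (hne _ _)).2
      have e2 := (hpar a (act b w) (hne _ _)).2
      have e3 := (hpar b w (hne _ _)).2
      rw [hmul, e2, e3, smul_smul] at e1
      have : v i (inc w) ≠ 0 := by
        rw [← norm_ne_zero_iff, (hv.eig i _).1]; norm_num
      exact (smul_left_injective ℂ this e1).symm)
    refine ⟨c, ψ, hψ, fun l w => ?_⟩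
    have h5 := congrArg (fun z : Circle => (z : ℂ)) (h l w)
    simp only [Circle.coe_mul, hχX] at h5
    rw [(hpar l w (hne l w)).2, smul_smul, mul_comm, h5]
    congr 2
  choose c ψ hψ h using main
  haveI : CompactSpace (Metric.closedBall (0:F) 1) := isCompact_iff_compactSpace.mp (isCompact_closedBall _ _)
  choose Ψ hΨ using fun i => ContinuousMap.exists_extension hince (⟨ψ i, hψ i⟩ : C(Metric.sphere (0:F) 1, ℝ))
  have hΨ' : ∀ i w, Ψ i (inc w) = ψ i w := fun i w => DFunLike.congr_fun (hΨ i) w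
  refine ⟨fun i w => ((Circle.exp (Ψ i w) : Circle) : ℂ) • v i w, ⟨?_, ?_, ?_⟩, c, ?_⟩
  · intro i
    have hvc := hv.cont i
    have : Continuous (fun w => ((Circle.exp (Ψ i w) : Circle) : ℂ)) := continuous_subtype_val.comp (Circle.exp.continuous.comp (Ψ i).continuous)
    exact this.smul hvc
  · intro x
    refine ⟨fun i => by rw [norm_smul, Circle.norm_coe, (hv.orth x).1 i, one_mul], fun i j hij => ?_⟩
    have := (hv.orth x).2 hij
    simp only at this ⊢
    rw [inner_smul_left, inner_smul_right, this]; simp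
  · intro i x
    exact (hv.eig i x).smul (Circle.norm_coe _)
  · intro i l w w' hw hw'
    have e1 : w = inc ⟨w.1, mem_sphere_zero_iff_norm.2 hw⟩ := rfl
    have e2 : w' = inc (act l ⟨w.1, mem_sphere_zero_iff_norm.2 hw⟩) := Subtype.ext hw'
    rw [e2]
    conv_rhs => rw [e1]
    simp only
    rw [hΨ', hΨ', h, smul_smul]


def Sph (m : ℕ) := {z : Fin (m+1) → ℂ // ∑ i, ‖z i‖^2 = 1}

instance (m : ℕ) : TopologicalSpace (Sph m) := inferInstanceAs (TopologicalSpace {z : Fin (m+1) → ℂ // ∑ i, ‖z i‖^2 = 1})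
instance (m : ℕ) : T2Space (Sph m) := inferInstanceAs (T2Space {z : Fin (m+1) → ℂ // ∑ i, ‖z i‖^2 = 1})

abbrev DD (m : ℕ) := Metric.closedBall (0 : EuclideanSpace ℂ (Fin m)) 1

lemma DD_le {m : ℕ} (w : DD m) : ∑ i, ‖w.1 i‖^2 ≤ 1 := by
  have h2 : ‖w.1‖ ≤ 1 := mem_closedBall_zero_iff.mp w.2
  rw [← EuclideanSpace.norm_sq_eq]
  nlinarith [norm_nonneg w.1]

lemma DD_one {m : ℕ} (w : DD m) : ∑ i, ‖w.1 i‖^2 = 1 ↔ ‖w.1‖ = 1 := by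
  rw [← EuclideanSpace.norm_sq_eq]
  constructor
  · intro h; nlinarith [norm_nonneg w.1]
  · intro h; rw [h]; norm_num

noncomputable def qv {m : ℕ} (l : Circle) (w : DD m) : Fin (m+1) → ℂ :=
  Fin.snoc (α := fun _ => ℂ) (fun i => (l:ℂ) * w.1 i) ((l:ℂ) * (Real.sqrt (1 - ∑ i, ‖w.1 i‖^2) : ℝ))

lemma qv_last {m : ℕ} (l : Circle) (w : DD m) : qv l w (Fin.last m) = (l:ℂ) * (Real.sqrt (1 - ∑ i, ‖w.1 i‖^2) : ℝ) := by
  simp [qv]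
lemma qv_cast {m : ℕ} (l : Circle) (w : DD m) (i : Fin m) : qv l w i.castSucc = (l:ℂ) * w.1 i := by
  simp [qv]

noncomputable def qq {m : ℕ} (p : Circle × DD m) : Sph m := ⟨qv p.1 p.2, by
  rw [Fin.sum_univ_castSucc, qv_last]
  simp only [qv_cast, norm_mul, Circle.norm_coe, one_mul, Complex.norm_real, Real.norm_eq_abs, sq_abs]
  rw [Real.sq_sqrt (by linarith [DD_le p.2])]; ring⟩

lemma qq_cont {m : ℕ} : Continuous (qq (m := m)) := by
  apply Continuous.subtype_mk
  have h0 : Continuous (fun p : Circle × DD m => (p.1 : ℂ)) := continuous_subtype_val.comp continuous_fst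
  have h1 : ∀ i, Continuous (fun p : Circle × DD m => p.2.1 i) := fun i => by fun_prop
  refine continuous_pi fun i => ?_
  refine Fin.lastCases ?_ (fun i => ?_) i
  · simp only [qv_last]; fun_prop
  · simp only [qv_cast]; fun_prop

lemma qq_surj {m : ℕ} : Function.Surjective (qq (m := m)) := by
  intro z
  have hz := z.2
  rw [Fin.sum_univ_castSucc] at hz
  obtain ⟨l, hl⟩ : ∃ l : Circle, z.1 (Fin.last m) = (l:ℂ) * (‖z.1 (Fin.last m)‖ : ℝ) := by
    refine ⟨Circle.exp (z.1 (Fin.last m)).arg, ?_⟩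
    rw [Circle.coe_exp, mul_comm, Complex.norm_mul_exp_arg_mul_I]
  have hs : ∑ i : Fin m, ‖((l⁻¹ : Circle) : ℂ) * z.1 i.castSucc‖^2 = 1 - ‖z.1 (Fin.last m)‖^2 := by
    simp only [norm_mul, Circle.norm_coe, one_mul]; linarith
  refine ⟨(l, ⟨WithLp.toLp 2 (fun i => ((l⁻¹ : Circle) : ℂ) * z.1 i.castSucc), ?_⟩), ?_⟩
  · rw [mem_closedBall_zero_iff, ← sq_le_one_iff₀ (norm_nonneg _), EuclideanSpace.norm_sq_eq]
    change ∑ i : Fin m, ‖((l⁻¹ : Circle) : ℂ) * z.1 i.castSucc‖^2 ≤ 1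
    rw [hs]; nlinarith [sq_nonneg ‖z.1 (Fin.last m)‖]
  · apply Subtype.ext
    funext i
    refine Fin.lastCases ?_ (fun i => ?_) i
    · change qv _ _ _ = _
      rw [qv_last]
      change (l:ℂ) * (Real.sqrt (1 - ∑ i : Fin m, ‖((l⁻¹ : Circle) : ℂ) * z.1 i.castSucc‖^2) : ℝ) = _
      rw [hs, sub_sub_cancel, Real.sqrt_sq (norm_nonneg _), ← hl]
    · change qv _ _ _ = _
      rw [qv_cast]
      change (l:ℂ) * (((l⁻¹ : Circle) : ℂ) * z.1 i.castSucc) = _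
      rw [← mul_assoc, ← Circle.coe_mul]; simp

lemma qq_fib {m : ℕ} (a : Circle) (p p' : Circle × DD m) (h : (qq p').1 = (a:ℂ) • (qq p).1) :
    p' = (a * p.1, p.2) ∨ (‖p.2.1‖ = 1 ∧ p'.2.1 = (((p'.1)⁻¹ * a * p.1 : Circle) : ℂ) • p.2.1) := by
  obtain ⟨l, w⟩ := p
  obtain ⟨l', w'⟩ := p'
  have hl : qv l' w' (Fin.last m) = a * qv l w (Fin.last m) := congrFun h _
  have hi : ∀ i : Fin m, qv l' w' i.castSucc = a * qv l w i.castSucc := fun i => congrFun h _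
  simp only [qv_cast] at hi
  rw [qv_last, qv_last] at hl
  have hw : w'.1 = (((l')⁻¹ * a * l : Circle) : ℂ) • w.1 := by
    ext i
    have := hi i
    have h1 : ((l'⁻¹ : Circle) : ℂ) * l' = 1 := by rw [← Circle.coe_mul]; simp
    simp only [PiLp.smul_apply, smul_eq_mul, Circle.coe_mul]
    calc w'.1 i = (((l'⁻¹ : Circle) : ℂ) * l') * w'.1 i := by rw [h1, one_mul]
      _ = ((l'⁻¹ : Circle) : ℂ) * (l' * w'.1 i) := by ring
      _ = _ := by rw [this]; ring
  by_cases h1 : ‖w.1‖ = 1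
  · exact Or.inr ⟨h1, hw⟩
  · left
    have hs : ∑ i, ‖w'.1 i‖^2 = ∑ i, ‖w.1 i‖^2 := by
      rw [← EuclideanSpace.norm_sq_eq, ← EuclideanSpace.norm_sq_eq, hw, norm_smul, Circle.norm_coe, one_mul]
    rw [hs] at hl
    have hpos : 0 < 1 - ∑ i, ‖w.1 i‖^2 := by
      have := lt_of_le_of_ne (DD_le w) (fun h => h1 ((DD_one w).1 h))
      linarith
    have hne : ((Real.sqrt (1 - ∑ i, ‖w.1 i‖^2) : ℝ) : ℂ) ≠ 0 := by
      exact_mod_cast (Real.sqrt_pos.mpr hpos).ne'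
    rw [← mul_assoc] at hl
    have hl2 := mul_right_cancel₀ hne hl
    have hl3 : l' = a * l := by
      apply Subtype.ext; exact hl2
    subst hl3
    refine Prod.ext rfl (Subtype.ext ?_)
    rw [hw, mul_assoc]; simp

lemma sphere_frame {m n : ℕ} (hm : 1 ≤ m)
    (B : Sph m → EuclideanSpace ℂ (Fin n) →L[ℂ] EuclideanSpace ℂ (Fin n))
    (hc : Continuous B) (hd : ∀ x, Dg (B x))
    (hB : ∀ (l : Circle) (z z' : Sph m), z'.1 = (l:ℂ) • z.1 → B z' = B z) :
    ∃ s, Frame B s ∧ ∃ c : Fin n → ℤ, ∀ i (l : Circle) (z z' : Sph m), z'.1 = (l:ℂ) • z.1 → 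
      s i z' = ((l:ℂ) ^ c i) • s i z := by
  have hq1 : ∀ (l : Circle) (w : DD m), (qq (l, w)).1 = (l:ℂ) • (qq ((1 : Circle), w)).1 := by
    intro l w
    funext i
    refine Fin.lastCases ?_ (fun i => ?_) i
    · change qv _ _ _ = _ * qv _ _ _
      rw [qv_last, qv_last]; simp
    · change qv _ _ _ = _ * qv _ _ _
      rw [qv_cast, qv_cast]; simp
  obtain ⟨v, hv, c, hvc⟩ := frame_norm hm (fun w => B (qq (1, w))) (hc.comp (qq_cont.comp (by fun_prop))) (fun w => hd _) (by
    intro l w w' h1 h2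
    apply hB l
    have h3 : ∑ i, ‖w'.1 i‖^2 = 1 := by
      rw [DD_one, h2, norm_smul, h1, Circle.norm_coe, one_mul]
    have h4 := (DD_one w).2 h1
    funext i
    refine Fin.lastCases ?_ (fun i => ?_) i
    · change qv _ _ _ = _ * qv _ _ _
      rw [qv_last, qv_last, h3, h4]; simp
    · change qv _ _ _ = _ * qv _ _ _
      rw [qv_cast, qv_cast, h2]; simp)
  let t : Fin n → Circle × DD m → EuclideanSpace ℂ (Fin n) := fun i p => ((p.1:ℂ) ^ c i) • v i p.2
  have ht : ∀ i, Continuous (t i) := by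
    intro i
    have h0 : Continuous (fun p : Circle × DD m => (((p.1 ^ c i : Circle)) : ℂ)) :=
      continuous_subtype_val.comp ((continuous_zpow (G := Circle) (c i)).comp continuous_fst)
    have h1 : Continuous (fun p : Circle × DD m => v i p.2) := (hv.cont i).comp continuous_snd
    have : t i = fun p => (((p.1 ^ c i : Circle)) : ℂ) • v i p.2 := by
      funext p; simp [t, Circle.coe_zpow]
    rw [this]; exact h0.smul h1
  have key : ∀ i (a : Circle) (p p' : Circle × DD m), (qq p').1 = (a:ℂ) • (qq p).1 → t i p' = ((a:ℂ) ^ c i) • t i p := by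
    intro i a p p' h
    rcases qq_fib a p p' h with h | ⟨h1, h2⟩
    · subst h
      simp only [t, Circle.coe_mul, mul_zpow, mul_smul]
    · simp only [t]
      rw [hvc i _ _ _ h1 h2, smul_smul, smul_smul, ← mul_zpow, ← mul_zpow, ← Circle.coe_mul, ← Circle.coe_mul]
      congr 3
      group; rfl
  let g : Sph m → Circle × DD m := Function.surjInv qq_surj
  have hg : ∀ z, qq (g z) = z := Function.surjInv_eq qq_surj
  have hts : ∀ i p, t i (g (qq p)) = t i p := by
    intro i p
    have := key i 1 p (g (qq p)) (by rw [hg]; simp)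
    simpa using this
  have hquot : Topology.IsQuotientMap (qq (m := m)) :=
    (qq_cont.isClosedMap).isQuotientMap qq_cont qq_surj
  refine ⟨fun i z => t i (g z), ⟨fun i => ?_, fun z => ?_, fun i z => ?_⟩, c, fun i l z z' h => ?_⟩
  · rw [hquot.continuous_iff]
    have : (fun z => t i (g z)) ∘ qq = t i := funext fun p => hts i p
    rw [this]; exact ht i
  · have ho := hv.orth (g z).2
    rw [orthonormal_iff_ite] at ho ⊢
    intro i j
    have := ho i j
    simp only [t]
    rw [inner_smul_left, inner_smul_right, this]
    split_ifs with hij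
    · subst hij
      rw [mul_one, ← Circle.coe_zpow, mul_comm, Complex.mul_conj, Complex.normSq_eq_norm_sq, Circle.norm_coe]; simp
    · simp
  · have he := hv.eig i (g z).2
    have : B z = B (qq (1, (g z).2)) := hB (g z).1 _ _ (by rw [← hq1]; exact congrArg (fun y => y.1) (hg z).symm)
    rw [this]
    exact he.smul (by rw [← Circle.coe_zpow, Circle.norm_coe])
  · apply key
    rw [hg, hg, h]

lemma Sph_ne {m : ℕ} (z : Sph m) : z.1 ≠ 0 := by
  intro h
  have := z.2
  simp [h] at this

noncomputable def pj {m : ℕ} (z : Sph m) : Projectivization ℂ (Fin (m+1) → ℂ) := Projectivization.mk ℂ z.1 (Sph_ne z)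

lemma pmk_cont {m : ℕ} : Continuous (fun v : {v : Fin (m+1) → ℂ // v ≠ 0} => Projectivization.mk ℂ v.1 v.2) :=
  continuous_quot_mk

lemma pj_cont {m : ℕ} : Continuous (pj (m := m)) := by
  have : Continuous (fun z : Sph m => (⟨z.1, Sph_ne z⟩ : {v : Fin (m+1) → ℂ // v ≠ 0})) :=
    Continuous.subtype_mk continuous_subtype_val _
  exact pmk_cont.comp this

def emb {m : ℕ} (hm : 2 ≤ m) (z : S5) : Sph m :=
  ⟨fun i => if h : (i:ℕ) < 3 then z.1 ⟨i, h⟩ else 0, by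
    have hz := z.2
    obtain ⟨k, rfl⟩ : ∃ k, m = k + 2 := ⟨m - 2, by omega⟩
    rw [Fin.sum_univ_succ, Fin.sum_univ_succ, Fin.sum_univ_succ]
    rw [Fin.sum_univ_three] at hz
    rw [Finset.sum_eq_zero]
    · have h2 : 2 % (k + 3) = 2 := Nat.mod_eq_of_lt (by omega)
      simpa [add_assoc, h2] using hz
    · intro i _
      simp⟩

lemma emb_cont {m : ℕ} (hm : 2 ≤ m) : Continuous (emb hm) := by
  apply Continuous.subtype_mk
  refine continuous_pi fun i => ?_
  by_cases h : (i:ℕ) < 3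
  · simp only [h, dif_pos]; exact S5.coord _
  · simp only [h, dif_neg, not_false_iff]; fun_prop

lemma emb_act {m : ℕ} (hm : 2 ≤ m) (l : Circle) (z : S5) : (emb hm (S5.act (fun _ => l) z)).1 = (l:ℂ) • (emb hm z).1 := by
  funext i
  by_cases h : (i:ℕ) < 3
  · simp [emb, h, S5.act]
  · simp [emb, h]

noncomputable def nrm {m : ℕ} (v : {v : Fin (m+1) → ℂ // v ≠ 0}) : ℝ := Real.sqrt (∑ i, ‖v.1 i‖^2)

lemma nrm_pos {m : ℕ} (v : {v : Fin (m+1) → ℂ // v ≠ 0}) : 0 < nrm v := by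
  apply Real.sqrt_pos.mpr
  obtain ⟨i, hi⟩ := Function.ne_iff.mp v.2
  apply Finset.sum_pos' (fun i _ => by positivity)
  exact ⟨i, Finset.mem_univ _, by have : 0 < ‖v.1 i‖ := norm_pos_iff.mpr hi
                                  positivity⟩

noncomputable def nz {m : ℕ} (v : {v : Fin (m+1) → ℂ // v ≠ 0}) : Sph m :=
  ⟨((nrm v : ℝ) : ℂ)⁻¹ • v.1, by
    have h := nrm_pos v
    have h2 : nrm v ^ 2 = ∑ i, ‖v.1 i‖^2 := Real.sq_sqrt (by positivity)
    simp only [Pi.smul_apply, smul_eq_mul, norm_mul, norm_inv, Complex.norm_real, Real.norm_eq_abs, abs_of_pos h, mul_pow]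
    rw [← Finset.mul_sum, ← h2]
    field_simp⟩

lemma nz_cont {m : ℕ} : Continuous (nz (m := m)) := by
  apply Continuous.subtype_mk
  have h : Continuous (fun v : {v : Fin (m+1) → ℂ // v ≠ 0} => ((nrm v : ℝ) : ℂ)) := by
    have hv : ∀ i, Continuous (fun v : {v : Fin (m+1) → ℂ // v ≠ 0} => v.1 i) := fun i =>
      (continuous_apply i).comp continuous_subtype_val
    unfold nrm
    exact Complex.continuous_ofReal.comp (Real.continuous_sqrt.comp
      (continuous_finsetSum _ fun i _ => ((hv i).norm.pow 2)))
  have h2 := h.inv₀ (fun v => by exact_mod_cast (nrm_pos v).ne')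
  exact h2.smul continuous_subtype_val

lemma nz_pj {m : ℕ} (v : {v : Fin (m+1) → ℂ // v ≠ 0}) : pj (nz v) = Projectivization.mk ℂ v.1 v.2 := by
  unfold pj
  rw [Projectivization.mk_eq_mk_iff']
  exact ⟨((nrm v : ℝ) : ℂ)⁻¹, rfl⟩

lemma pj_eq {m : ℕ} {z z' : Sph m} (h : pj z' = pj z) : ∃ l : Circle, z'.1 = (l:ℂ) • z.1 := by
  unfold pj at h
  rw [Projectivization.mk_eq_mk_iff'] at h
  obtain ⟨a, ha⟩ := h
  have h1 := z'.2
  rw [← ha] at h1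
  simp only [Pi.smul_apply, smul_eq_mul, norm_mul, mul_pow] at h1
  rw [← Finset.mul_sum, z.2, mul_one] at h1
  have h2 : ‖a‖ = 1 := by nlinarith [norm_nonneg a]
  exact ⟨⟨a, mem_sphere_zero_iff_norm.mpr h2⟩, ha.symm⟩

lemma pj_smul {m : ℕ} {z z' : Sph m} (l : Circle) (h : z'.1 = (l:ℂ) • z.1) : pj z' = pj z := by
  unfold pj
  rw [Projectivization.mk_eq_mk_iff']
  exact ⟨l, h.symm⟩

/-- Every continuous, pointwise normal, multiplicity-free matrix over `ℂP^m`, `m ≥ 2`,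
is diagonalizable by a continuous unitary. -/
theorem stmt_0 (m n : ℕ) (hm : 2 ≤ m) (hn : 1 ≤ n)
    (A : Projectivization ℂ (Fin (m + 1) → ℂ) → Matrix (Fin n) (Fin n) ℂ)
    (hA : Continuous A)
    (hnormal : ∀ x, A x * (A x)ᴴ = (A x)ᴴ * A x)
    (hmf : ∀ x, ∃ μ : Fin n → ℂ, Function.Injective μ ∧
      ∀ t : ℂ, (t • (1 : Matrix (Fin n) (Fin n) ℂ) - A x).det = ∏ i, (t - μ i)) :
    ∃ U : Projectivization ℂ (Fin (m + 1) → ℂ) → Matrix (Fin n) (Fin n) ℂ,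
      Continuous U ∧ (∀ x, (U x)ᴴ * U x = 1) ∧
      ∀ x, ((U x)ᴴ * A x * U x).IsDiag := by
  have hE : Continuous (fun B : Matrix (Fin n) (Fin n) ℂ => toEuclideanCLM (n := Fin n) (𝕜 := ℂ) B) :=
    LinearMap.continuous_of_finiteDimensional
      ((toEuclideanCLM (n := Fin n) (𝕜 := ℂ)).toAlgEquiv.toLinearMap)
  obtain ⟨s, hs, c, hsc⟩ := sphere_frame (m := m) (n := n) (by omega)
    (fun z => toEuclideanCLM (n := Fin n) (𝕜 := ℂ) (A (pj z))) (hE.comp (hA.comp pj_cont))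
    (fun z => Dg_of_matrix _ (hnormal _) (hmf _)) (fun l z z' h => by rw [pj_smul l h])
  have hin : ∀ z i j, ∑ l, (starRingEnd ℂ) (s i z l) * s j z l = if i = j then 1 else 0 := by
    intro z i j
    have := orthonormal_iff_ite.mp (hs.orth z) i j
    rw [← this, PiLp.inner_apply]
    refine Finset.sum_congr rfl fun l _ => ?_
    simp [mul_comm]
  have hc0 : ∀ i, c i = 0 := by
    let V : Fin n → Fin n → C(S5, ℂ) := fun l i => ⟨fun z => s i (emb hm z) l, by
      have := (hs.cont i).comp (emb_cont hm)
      exact (EuclideanSpace.proj (𝕜 := ℂ) l).continuous.comp this⟩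
    refine thmQ V (fun z i j => hin (emb hm z) i j) c (fun l i ζ z => ?_)
    change s i (emb hm (S5.act (fun _ => ζ) z)) l = _ * s i (emb hm z) l
    rw [hsc i ζ _ _ (emb_act hm ζ z)]; rfl
  have hinv : ∀ i z z', pj z' = pj z → s i z' = s i z := by
    intro i z z' h
    obtain ⟨l, hl⟩ := pj_eq h
    rw [hsc i l z z' hl, hc0, zpow_zero, one_smul]
  let g : Projectivization ℂ (Fin (m + 1) → ℂ) → Sph m := fun x => nz ⟨x.rep, x.rep_nonzero⟩
  have hg : ∀ x, pj (g x) = x := fun x => (nz_pj _).trans (Projectivization.mk_rep x)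
  refine ⟨fun x => Matrix.of fun l i => s i (g x) l, ?_, ?_, ?_⟩
  · have hq : Topology.IsQuotientMap (fun v : {v : Fin (m+1) → ℂ // v ≠ 0} => Projectivization.mk ℂ v.1 v.2) :=
      isQuotientMap_quot_mk
    rw [hq.continuous_iff]
    refine continuous_matrix fun l i => ?_
    have : (fun v : {v : Fin (m+1) → ℂ // v ≠ 0} => s i (g (Projectivization.mk ℂ v.1 v.2)) l) = fun v => s i (nz v) l := by
      funext v
      rw [hinv i (nz v) _ (by rw [hg, nz_pj])]
    change Continuous (fun v : {v : Fin (m+1) → ℂ // v ≠ 0} => s i (g (Projectivization.mk ℂ v.1 v.2)) l)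
    rw [this]
    exact (EuclideanSpace.proj (𝕜 := ℂ) l).continuous.comp ((hs.cont i).comp nz_cont)
  · intro x
    ext i j
    rw [Matrix.mul_apply, Matrix.one_apply, ← hin (g x) i j]
    rfl
  · intro x i j hij
    have he := (hs.eig j (g x)).2
    rw [hg] at he
    set a := inner ℂ (s j (g x)) (toEuclideanCLM (n := Fin n) (𝕜 := ℂ) (A x) (s j (g x))) with ha
    have he2 : ∀ l, ∑ k, A x l k * s j (g x) k = a * s j (g x) l := fun l =>
      congrArg (fun y : EuclideanSpace ℂ (Fin n) => y l) he
    rw [Matrix.mul_assoc, Matrix.mul_apply]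
    simp only [Matrix.mul_apply, Matrix.of_apply, he2, Matrix.conjTranspose_apply]
    have := hin (g x) i j
    rw [if_neg hij] at this
    calc _ = a * ∑ l, (starRingEnd ℂ) (s i (g x) l) * s j (g x) l := by
            rw [Finset.mul_sum]
            refine Finset.sum_congr rfl fun l _ => ?_
            rw [starRingEnd_apply]; ring
      _ = 0 := by rw [this, mul_zero]
end

section
/- Let S² denote the unit sphere in ℝ³ and X = S² × S² with the product topology. Let λ_1, λ_2 : X → ℂ be continuous functions with λ_1(x) ≠ λ_2(x) for every x ∈ X. Then the set of unitary equivalence classes of continuous maps A : X → M(2,ℂ) such that A(x) is normal and det(t·I − A(x)) = (t − λ_1(x))(t − λ_2(x)) for all x is infinite. -/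
open Matrix

/-- The unit 2-sphere in `ℝ³`. -/
def Sphere2 : Type := {p : ℝ × ℝ × ℝ // p.1 ^ 2 + p.2.1 ^ 2 + p.2.2 ^ 2 = 1}

instance : TopologicalSpace Sphere2 :=
  inferInstanceAs (TopologicalSpace {p : ℝ × ℝ × ℝ // p.1 ^ 2 + p.2.1 ^ 2 + p.2.2 ^ 2 = 1})

/-- Unitary equivalence of matrices over a topological space `X`. -/
def UnitarilyEquiv {X : Type*} [TopologicalSpace X] {n : ℕ}
    (A B : X → Matrix (Fin n) (Fin n) ℂ) : Prop :=
  ∃ U : X → Matrix (Fin n) (Fin n) ℂ, Continuous U ∧ (∀ x, (U x)ᴴ * U x = 1) ∧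
    ∀ x, B x = (U x)ᴴ * A x * U x

/-- The set of continuous normal `2 × 2` matrices over `S² × S²` with characteristic
polynomial `(t - λ₁(x))(t - λ₂(x))`. -/
def NormalWithTwoEigenvalues (l₁ l₂ : Sphere2 × Sphere2 → ℂ) :
    Set (Sphere2 × Sphere2 → Matrix (Fin 2) (Fin 2) ℂ) :=
  {A | Continuous A ∧ (∀ x, A x * (A x)ᴴ = (A x)ᴴ * A x) ∧
    ∀ x, ∀ t : ℂ, (t • (1 : Matrix (Fin 2) (Fin 2) ℂ) - A x).det = (t - l₁ x) * (t - l₂ x)}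

theorem aux_log (F : ℂ → ℂ) (hF : Continuous F) (h0 : ∀ z, F z ≠ 0) :
    ∃ f : ℂ → ℂ, Continuous f ∧ ∀ z, Complex.exp (f z) = F z := by
  rcases Complex.isCoveringMapOn_exp.existsUnique_continuousMap_lifts
    (⟨F, hF⟩ : C(ℂ, ℂ)) (a₀ := 0) (Complex.exp_log (h0 0))
    (fun x => h0 x) with ⟨f, ⟨-, hf⟩, -⟩
  exact ⟨f, f.continuous, fun z => congrFun hf z⟩

theorem aux_winding (F G : ℂ → ℂ) (hF : Continuous F) (hG : Continuous G)
    (hF0 : ∀ z, F z ≠ 0) (hG0 : ∀ z, G z ≠ 0) (n m : ℕ)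
    (h : ∀ z : ℂ, ‖z‖ = 1 → G z * z ^ n = z ^ m * F z) : n = m := by
  obtain ⟨f, hf, hfF⟩ := aux_log F hF hF0
  obtain ⟨g, hg, hgG⟩ := aux_log G hG hG0
  let e : ℝ → ℂ := fun θ => Complex.exp (θ * Complex.I)
  have he : Continuous e := by fun_prop
  let H : ℝ → ℂ := fun θ => f (e θ) - g (e θ) + ((m : ℂ) - n) * (θ * Complex.I)
  have hH : Continuous H := by fun_prop
  have hH1 : ∀ θ, Complex.exp (H θ) = 1 := by
    intro θ
    have h1 := h (e θ) (Complex.norm_exp_ofReal_mul_I θ)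
    have h2 : H θ = ((m : ℂ) * (θ * Complex.I) + f (e θ)) - (g (e θ) + n * (θ * Complex.I)) := by
      simp only [H]; ring
    rw [h2, Complex.exp_sub, Complex.exp_add, Complex.exp_add, Complex.exp_nat_mul,
      Complex.exp_nat_mul, hfF, hgG]
    change (e θ) ^ m * _ / (_ * (e θ) ^ n) = 1
    rw [← h1]
    exact div_self (mul_ne_zero (hG0 _) (pow_ne_zero _ (Complex.exp_ne_zero _)))
  have hk : ∀ θ, ∃ k : ℤ, H θ = k * (2 * Real.pi * Complex.I) := fun θ =>
    Complex.exp_eq_one_iff.1 (hH1 θ)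
  choose k hk using hk
  have hkr : ∀ θ, ((k θ : ℤ) : ℝ) = (H θ).im / (2 * Real.pi) := by
    intro θ
    rw [hk θ]
    have := Real.pi_pos
    simp
  have hkc : Continuous k := by
    rw [Int.isClosedEmbedding_coe_real.isEmbedding.continuous_iff]
    have : ((fun x : ℤ => (x : ℝ)) ∘ k) = fun θ => (H θ).im / (2 * Real.pi) := funext hkr
    rw [this]
    fun_prop
  have hc : k 0 = k (2 * Real.pi) :=
    PreconnectedSpace.constant inferInstance hkc
  have hHe : H 0 = H (2 * Real.pi) := by rw [hk, hk, hc]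
  have e0 : e 0 = 1 := by simp [e]
  have e1 : e (2 * Real.pi) = 1 := by simp [e]
  simp only [H, e0, e1] at hHe
  have : ((m : ℂ) - n) * (((2 * Real.pi : ℝ) : ℂ) * Complex.I) = 0 := by
    have h3 := hHe
    simp only [Complex.ofReal_zero, zero_mul, mul_zero, add_zero] at h3
    linear_combination -h3
  rcases mul_eq_zero.1 this with h4 | h4
  · exact_mod_cast (sub_eq_zero.1 h4).symm
  · exfalso
    have := Real.pi_ne_zero
    simp at h4

noncomputable def phiMap (n : ℕ) (z : ℂ) : ℂ := z ^ (n + 1) / ((‖z‖ : ℂ) ^ n)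

theorem phiMap_norm (n : ℕ) (z : ℂ) : ‖phiMap n z‖ = ‖z‖ := by
  unfold phiMap
  by_cases hz : z = 0
  · simp [hz]
  · have : ‖z‖ ≠ 0 := norm_ne_zero_iff.2 hz
    simp only [norm_div, norm_pow, Complex.norm_real, norm_norm]
    rw [pow_succ]; field_simp

theorem phiMap_cont (n : ℕ) : Continuous (phiMap n) := by
  rw [continuous_iff_continuousAt]
  intro z
  by_cases hz : z = 0
  · subst hz
    unfold ContinuousAt
    have h0 : phiMap n 0 = 0 := by simp [phiMap]
    rw [h0, tendsto_zero_iff_norm_tendsto_zero]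
    simp only [phiMap_norm]
    simpa using (continuous_norm (E := ℂ)).tendsto 0
  · have : ((‖z‖ : ℂ) ^ n) ≠ 0 := pow_ne_zero _ (by simpa using hz)
    unfold phiMap
    exact ContinuousAt.div (by fun_prop) (by fun_prop) this

theorem phiMap_circle (n : ℕ) (z : ℂ) (hz : ‖z‖ = 1) : phiMap n z = z ^ (n + 1) := by
  simp [phiMap, hz]

noncomputable def sz (p : Sphere2) : ℂ := p.1.1 + p.1.2.1 * Complex.I
def st (p : Sphere2) : ℝ := p.1.2.2

theorem sphere_val_cont : Continuous (fun p : Sphere2 => p.1) := continuous_subtype_val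

theorem sz_cont : Continuous sz := by
  have := sphere_val_cont
  unfold sz; fun_prop

theorem st_cont : Continuous st := by
  have := sphere_val_cont
  unfold st; fun_prop

theorem sphere_rel (n : ℕ) (p : Sphere2) :
    phiMap n (sz p) * star (phiMap n (sz p)) = (1 + (st p : ℂ)) * (1 - (st p : ℂ)) := by
  have h1 : phiMap n (sz p) * star (phiMap n (sz p)) = ((‖phiMap n (sz p)‖ ^ 2 : ℝ) : ℂ) := by
    rw [← Complex.normSq_eq_norm_sq]; exact Complex.mul_conj _
  rw [h1, phiMap_norm, ← Complex.normSq_eq_norm_sq]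
  have h2 := p.2
  have h3 : Complex.normSq (sz p) = (1 + st p) * (1 - st p) := by
    simp only [sz, st, Complex.normSq_add_mul_I]
    linear_combination h2
  rw [h3]; push_cast; ring

/-- twice the projection -/
noncomputable def Qm (n : ℕ) (p : Sphere2) : Matrix (Fin 2) (Fin 2) ℂ :=
  !![1 + (st p : ℂ), phiMap n (sz p); star (phiMap n (sz p)), 1 - (st p : ℂ)]

theorem Qm_cont (n : ℕ) : Continuous (Qm n) := by
  have h1 := sz_cont
  have h2 := st_cont
  have h3 := phiMap_cont n
  refine continuous_matrix fun i j => ?_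
  fin_cases i <;> fin_cases j <;> simp [Qm] <;> fun_prop

noncomputable def Am (l₁ l₂ : Sphere2 × Sphere2 → ℂ) (n : ℕ) (x : Sphere2 × Sphere2) :
    Matrix (Fin 2) (Fin 2) ℂ :=
  l₂ x • 1 + ((l₁ x - l₂ x) / 2) • Qm n x.1

theorem Qm_herm (n : ℕ) (p : Sphere2) : (Qm n p)ᴴ = Qm n p := by
  ext i j
  fin_cases i <;> fin_cases j <;> simp [Qm]

theorem Am_mem (l₁ l₂ : Sphere2 × Sphere2 → ℂ)
    (hl₁ : Continuous l₁) (hl₂ : Continuous l₂) (n : ℕ) :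
    Am l₁ l₂ n ∈ NormalWithTwoEigenvalues l₁ l₂ := by
  refine ⟨?_, ?_, ?_⟩
  · have := Qm_cont n
    unfold Am; fun_prop
  · intro x
    unfold Am
    simp only [conjTranspose_add, conjTranspose_smul, conjTranspose_one, Qm_herm]
    simp only [add_mul, mul_add, smul_mul_assoc, mul_smul_comm, one_mul, mul_one, smul_add,
      smul_smul]
    simp only [mul_comm]
    abel
  · intro x t
    have h := sphere_rel n x.1
    rw [det_fin_two]
    simp [Am, Qm]
    simp at h
    linear_combination (-((l₁ x - l₂ x) / 2) ^ 2) * h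

/-- stereographic charts; `s = 1` or `s = -1` -/
noncomputable def chart (s : ℝ) (hs : s ^ 2 = 1) (z : ℂ) : Sphere2 :=
  ⟨(2 * z.re / (1 + ‖z‖ ^ 2), 2 * z.im / (1 + ‖z‖ ^ 2), s * (1 - ‖z‖ ^ 2) / (1 + ‖z‖ ^ 2)), by
    have h1 : 1 + ‖z‖ ^ 2 ≠ 0 := by positivity
    have h2 : ‖z‖ ^ 2 = z.re ^ 2 + z.im ^ 2 := by
      rw [← Complex.normSq_eq_norm_sq, Complex.normSq_apply]; ring
    simp only
    field_simp
    rw [hs, h2]; ring⟩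

theorem chart_cont (s : ℝ) (hs : s ^ 2 = 1) : Continuous (chart s hs) := by
  refine Continuous.subtype_mk ?_ _
  have h1 : ∀ z : ℂ, 1 + ‖z‖ ^ 2 ≠ 0 := fun z => by positivity
  refine Continuous.prodMk ?_ (Continuous.prodMk ?_ ?_)
  all_goals exact Continuous.div (by fun_prop) (by fun_prop) h1

theorem chart_st (s : ℝ) (hs : s ^ 2 = 1) (z : ℂ) : 1 + s * st (chart s hs z) ≠ 0 := by
  have h1 : 1 + ‖z‖ ^ 2 ≠ 0 := by positivity
  have : 1 + s * st (chart s hs z) = 2 / (1 + ‖z‖ ^ 2) := by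
    simp only [st, chart]
    field_simp
    rw [hs]; ring
  rw [this]; positivity

theorem chart_eq (z : ℂ) (hz : ‖z‖ = 1) (s : ℝ) (hs : s ^ 2 = 1) :
    sz (chart s hs z) = z ∧ st (chart s hs z) = 0 := by
  constructor
  · apply Complex.ext <;> simp [sz, chart, hz] <;> ring_nf <;> simp
  · simp [st, chart, hz]

theorem key (l₁ l₂ : Sphere2 × Sphere2 → ℂ) (hdist : ∀ x, l₁ x ≠ l₂ x) (n m : ℕ)
    (h : UnitarilyEquiv (Am l₁ l₂ n) (Am l₁ l₂ m)) : n = m := by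
  obtain ⟨U, hU, hUU, hUA⟩ := h
  have hq : ∀ x, Qm n x.1 * U x = U x * Qm m x.1 := by
    intro x
    have h1 : U x * (U x)ᴴ = 1 := mul_eq_one_comm.1 (hUU x)
    have h2 : U x * Am l₁ l₂ m x = Am l₁ l₂ n x * U x := by
      rw [hUA x, ← mul_assoc, ← mul_assoc, h1, one_mul]
    have h3 : ((l₁ x - l₂ x) / 2) ≠ 0 := div_ne_zero (sub_ne_zero.2 (hdist x)) two_ne_zero
    simp only [Am, mul_add, add_mul, smul_mul_assoc, mul_smul_comm, one_mul, mul_one] at h2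
    exact (smul_right_injective _ h3 (add_left_cancel h2)).symm
  have hdet : ∀ x, U x 0 0 * U x 1 1 - U x 0 1 * U x 1 0 ≠ 0 := by
    intro x h0
    rw [← det_fin_two] at h0
    have := congrArg det (hUU x)
    rw [det_mul, h0] at this
    simp at this
  let q0 : Sphere2 := chart 1 (by norm_num) 0
  let cN : ℂ → Sphere2 × Sphere2 := fun z => (chart 1 (by norm_num) z, q0)
  let cS : ℂ → Sphere2 × Sphere2 := fun z => (chart (-1) (by norm_num) z, q0)
  have hcN : Continuous cN := (chart_cont _ _).prodMk continuous_const
  have hcS : Continuous cS := (chart_cont _ _).prodMk continuous_const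
  have hQ := Qm_cont m
  have hM : Continuous fun x : Sphere2 × Sphere2 => U x * Qm m x.1 := by fun_prop
  let M : Sphere2 × Sphere2 → Matrix (Fin 2) (Fin 2) ℂ := fun x => U x * Qm m x.1
  have hM : Continuous M := hM
  have e : ∀ x, ∀ i j, M x i j = U x i 0 * Qm m x.1 0 j + U x i 1 * Qm m x.1 1 j := by
    intro x i j
    simp only [M, mul_apply, Fin.sum_univ_two]
  have e' : ∀ x, ∀ i j, M x i j = Qm n x.1 i 0 * U x 0 j + Qm n x.1 i 1 * U x 1 j := by
    intro x i j
    simp only [M, ← hq, mul_apply, Fin.sum_univ_two]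
  have := aux_winding (fun z => M (cN z) 0 0) (fun z => M (cS z) 1 1)
    ((hM.comp hcN).matrix_elem 0 0) ((hM.comp hcS).matrix_elem 1 1) ?_ ?_ (n + 1) (m + 1) ?_
  · omega
  · intro z h0
    have ht := chart_st 1 (by norm_num) z
    set x := cN z with hx
    have ht : (1 + (st x.1 : ℂ)) ≠ 0 := by
      rw [one_mul] at ht; exact_mod_cast ht
    have r1 := sphere_rel n x.1
    have a0 := e x 0 0
    have a1 := e x 1 0
    have b0 := e' x 0 0
    have b1 := e' x 1 0
    rw [h0] at a0 b0
    simp only [Qm, of_apply, cons_val', cons_val_zero, cons_val_one, cons_val_fin_one] at a0 a1 b0 b1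
    have h10 : M x 1 0 = 0 := by
      apply (mul_eq_zero.1 _).resolve_left ht
      rw [b1]
      linear_combination (-star (phiMap n (sz x.1))) * b0 - U x 1 0 * r1
    rw [h10] at a1
    apply mul_ne_zero (hdet x) ht
    linear_combination (-U x 1 1) * a0 + U x 0 1 * a1
  · intro z h0
    have ht := chart_st (-1) (by norm_num) z
    set x := cS z with hx
    have ht : (1 - (st x.1 : ℂ)) ≠ 0 := by
      rw [neg_one_mul, ← sub_eq_add_neg] at ht
      have ht2 : (1 : ℝ) - st x.1 ≠ 0 := ht
      exact_mod_cast ht2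
    have r1 := sphere_rel n x.1
    have a0 := e x 0 1
    have a1 := e x 1 1
    have b0 := e' x 0 1
    have b1 := e' x 1 1
    rw [h0] at a1 b1
    simp only [Qm, of_apply, cons_val', cons_val_zero, cons_val_one, cons_val_fin_one] at a0 a1 b0 b1
    have h10 : M x 0 1 = 0 := by
      apply (mul_eq_zero.1 _).resolve_left ht
      rw [b0]
      linear_combination (-phiMap n (sz x.1)) * b1 - U x 0 1 * r1
    rw [h10] at a0
    apply mul_ne_zero (hdet x) ht
    linear_combination (-U x 0 0) * a1 + U x 1 0 * a0
  · intro z hz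
    obtain ⟨s1, s2⟩ := chart_eq z hz 1 (by norm_num)
    have hNS : cS z = cN z := by
      simp only [cS, cN, Prod.mk.injEq, and_true]
      apply Subtype.ext
      simp [chart, hz]
    simp only [hNS]
    set x := cN z with hx
    have s1 : sz x.1 = z := s1
    have s2 : st x.1 = 0 := s2
    have r1 := sphere_rel n x.1
    have r2 := sphere_rel m x.1
    have a0 := e x 1 0
    have a1 := e x 1 1
    have b0 := e' x 0 0
    have b1 := e' x 1 0
    simp only [Qm, of_apply, cons_val', cons_val_zero, cons_val_one, cons_val_fin_one, s1, s2,
      phiMap_circle _ z hz, Complex.ofReal_zero, add_zero, sub_zero, one_mul, mul_one] at a0 a1 b0 b1 r1 r2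
    have c1 : M x 1 1 = z ^ (m + 1) * M x 1 0 := by
      rw [a1, a0]; linear_combination (-U x 1 1) * r2
    have c2 : z ^ (n + 1) * M x 1 0 = M x 0 0 := by
      rw [b1, b0]; linear_combination (U x 0 0) * r1
    rw [c1]; linear_combination z ^ (m + 1) * c2

theorem ue_equiv {X : Type*} [TopologicalSpace X] {n : ℕ} :
    Equivalence (fun A B : X → Matrix (Fin n) (Fin n) ℂ => UnitarilyEquiv A B) := by
  refine ⟨?_, ?_, ?_⟩
  · intro A
    exact ⟨fun _ => 1, continuous_const, by simp, by simp⟩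
  · rintro A B ⟨U, hU, h1, h2⟩
    have h3 : ∀ x, U x * (U x)ᴴ = 1 := fun x => mul_eq_one_comm.1 (h1 x)
    refine ⟨fun x => (U x)ᴴ, hU.matrix_conjTranspose, by simpa using h3, fun x => ?_⟩
    rw [h2 x, conjTranspose_conjTranspose]
    calc A x = (U x * (U x)ᴴ) * A x * (U x * (U x)ᴴ) := by simp [h3]
      _ = _ := by simp only [mul_assoc]
  · rintro A B C ⟨U, hU, h1, h2⟩ ⟨V, hV, h3, h4⟩
    refine ⟨fun x => U x * V x, hU.matrix_mul hV, fun x => ?_, fun x => ?_⟩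
    · calc (U x * V x)ᴴ * (U x * V x) = (V x)ᴴ * ((U x)ᴴ * U x) * V x := by
            simp only [conjTranspose_mul, mul_assoc]
        _ = 1 := by rw [h1, mul_one, h3]
    · rw [h4, h2, conjTranspose_mul]; simp only [mul_assoc]

/-- For any multiplicity-free split characteristic polynomial of degree two over `S² × S²`,
there are infinitely many unitary equivalence classes of normal matrices realizing it. -/
theorem stmt_7 (l₁ l₂ : Sphere2 × Sphere2 → ℂ)
    (hl₁ : Continuous l₁) (hl₂ : Continuous l₂)
    (hdist : ∀ x, l₁ x ≠ l₂ x) :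
    Infinite (Quot fun (A B : NormalWithTwoEigenvalues l₁ l₂) =>
      UnitarilyEquiv A.1 B.1) := by
  refine Infinite.of_injective
    (fun n : ℕ => Quot.mk _ (⟨Am l₁ l₂ n, Am_mem l₁ l₂ hl₁ hl₂ n⟩ :
      NormalWithTwoEigenvalues l₁ l₂)) ?_
  intro n m h
  have hE : Equivalence (fun (A B : NormalWithTwoEigenvalues l₁ l₂) =>
      UnitarilyEquiv A.1 B.1) :=
    ⟨fun A => ue_equiv.refl A.1, fun h => ue_equiv.symm h, fun h h' => ue_equiv.trans h h'⟩
  have h1 := Quot.eqvGen_exact h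
  rw [hE.eqvGen_iff] at h1
  exact key l₁ l₂ hdist n m h1
end

section
/- Let S² = {(x,y,z) ∈ ℝ³ : x² + y² + z² = 1} and define A : S² → M(2,ℂ) by A(x,y,z) = [[x² + x³ + y² + xy² + i(1 − x)z², (y + iz)(x² + y² − iz²)], [(y − iz)(x² + y² − iz²), x² − x³ + y² − xy² + i(1 + x)z²]]. Then: (1) A(p) is normal for every p ∈ S²; (2) det(t·I − A(x,y,z)) = (t − 2(x² + y²))(t − 2iz²) for every (x,y,z) ∈ S², and the two eigenvalues 2(x² + y²) and 2iz² are distinct at every point of S²; (3) A is not diagonalizable over S²: there is no continuous U : S² → M(2,ℂ) with U(p)*U(p) = I for all p such that U(p)*A(p)U(p) is diagonal for every p. -/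
open Matrix Complex

/-- The explicit normal matrix over `S²` from Example 5.1. -/
noncomputable def matA (p : Sphere2) : Matrix (Fin 2) (Fin 2) ℂ :=
  let x : ℂ := (p.1.1 : ℂ)
  let y : ℂ := (p.1.2.1 : ℂ)
  let z : ℂ := (p.1.2.2 : ℂ)
  !![x ^ 2 + x ^ 3 + y ^ 2 + x * y ^ 2 + I * (1 - x) * z ^ 2,
      (y + I * z) * (x ^ 2 + y ^ 2 - I * z ^ 2);
    (y - I * z) * (x ^ 2 + y ^ 2 - I * z ^ 2),
      x ^ 2 - x ^ 3 + y ^ 2 - x * y ^ 2 + I * (1 + x) * z ^ 2]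


lemma no_ext (F : ℂ → ℂ) (hF : Continuous F) (h0 : ∀ w, F w ≠ 0)
    (h1 : ∀ w, ‖w‖ = 1 → F w = w) : False := by
  obtain ⟨g, ⟨-, hg⟩, -⟩ := Complex.isCoveringMapOn_exp.existsUnique_continuousMap_lifts
    (A := ℂ) ⟨F, hF⟩ (a₀ := 0) (e₀ := Complex.log (F 0)) (by simp [Complex.exp_log (h0 0)])
    (by intro a; simpa using h0 a)
  have hg' : ∀ w, Complex.exp (g w) = F w := fun w => congrFun hg w
  have hgc : Continuous g := g.continuous
  have key := isPreconnected_univ.eq_or_eq_neg_of_sq_eq (S := (Set.univ : Set ℝ))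
    (f := fun θ : ℝ => Complex.exp (g (Complex.exp (θ * I)) / 2))
    (g := fun θ : ℝ => Complex.exp (θ * I / 2))
    (by fun_prop) (by fun_prop)
    (by
      intro θ _
      simp only [Pi.pow_apply, ← Complex.exp_nat_mul]
      push_cast
      rw [mul_div_cancel₀ _ two_ne_zero, mul_div_cancel₀ _ two_ne_zero, hg', h1]
      exact Complex.norm_exp_ofReal_mul_I θ)
    (by intro θ _; exact Complex.exp_ne_zero _)
  have e0 : Complex.exp (((0 : ℝ) : ℂ) * I) = 1 := by simp
  have e1 : Complex.exp (((2 * Real.pi : ℝ) : ℂ) * I) = 1 := by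
    push_cast; exact Complex.exp_two_pi_mul_I
  have e2 : Complex.exp (((2 * Real.pi : ℝ) : ℂ) * I / 2) = -1 := by
    rw [← Complex.exp_pi_mul_I]; congr 1; push_cast; ring
  have e3 : Complex.exp (((0 : ℝ) : ℂ) * I / 2) = 1 := by simp
  rcases key with h | h
  · have a := h (Set.mem_univ 0)
    have b := h (Set.mem_univ (2 * Real.pi))
    simp only [e0, e1, e2, e3] at a b
    rw [a] at b; norm_num at b
  · have a := h (Set.mem_univ 0)
    have b := h (Set.mem_univ (2 * Real.pi))
    simp only [Pi.neg_apply, e0, e1, e2, e3] at a b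
    rw [a] at b; norm_num at b

lemma ster_ne (w : ℂ) : 1 + w.re ^ 2 + w.im ^ 2 ≠ 0 := by positivity

/-- Stereographic parametrization, with a sign `e`. -/
noncomputable def ster (e : ℝ) (he : e ^ 2 = 1) (w : ℂ) : Sphere2 :=
  ⟨(e * ((1 - w.re ^ 2 - w.im ^ 2) / (1 + w.re ^ 2 + w.im ^ 2)),
    2 * w.re / (1 + w.re ^ 2 + w.im ^ 2), 2 * w.im / (1 + w.re ^ 2 + w.im ^ 2)), by
    have := ster_ne w
    simp only [mul_pow, he]
    field_simp
    ring⟩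

lemma ster_cont (e : ℝ) (he : e ^ 2 = 1) : Continuous (ster e he) := by
  refine Continuous.subtype_mk (f := fun w : ℂ =>
   ((e * ((1 - w.re ^ 2 - w.im ^ 2) / (1 + w.re ^ 2 + w.im ^ 2)),
    2 * w.re / (1 + w.re ^ 2 + w.im ^ 2), 2 * w.im / (1 + w.re ^ 2 + w.im ^ 2)) : ℝ × ℝ × ℝ)) ?_ _
  have := ster_ne
  fun_prop (disch := exact this _)

lemma ster_x (e : ℝ) (he : e ^ 2 = 1) (w : ℂ) : 1 + e * (ster e he w).1.1 ≠ 0 := by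
  have := ster_ne w
  have h : 1 + e * (ster e he w).1.1 = 2 / (1 + w.re ^ 2 + w.im ^ 2) := by
    simp only [ster]
    rw [← mul_assoc, ← sq, he]
    field_simp
    ring
  rw [h]; positivity

lemma ster_circ (e : ℝ) (he : e ^ 2 = 1) (w : ℂ) (hw : ‖w‖ = 1) :
    (ster e he w).1 = (0, w.re, w.im) := by
  have h : w.re ^ 2 + w.im ^ 2 = 1 := by
    have := Complex.sq_norm w
    rw [hw, Complex.normSq_apply] at this
    nlinarith
  have h2 : 1 + w.re ^ 2 + w.im ^ 2 = 2 := by linarith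
  have h3 : 1 - w.re ^ 2 - w.im ^ 2 = 0 := by linarith
  simp [ster, h2, h3]

lemma ev_ne (p : Sphere2) :
    (p.1.1 : ℂ) ^ 2 + (p.1.2.1 : ℂ) ^ 2 - I * (p.1.2.2 : ℂ) ^ 2 ≠ 0 := by
  obtain ⟨⟨x, y, z⟩, h⟩ := p
  intro H
  have hr := congrArg Complex.re H
  have hi := congrArg Complex.im H
  simp [← Complex.ofReal_pow] at hr hi h
  simp [hi] at h
  linarith

lemma matA_normal (p : Sphere2) : matA p * (matA p)ᴴ = (matA p)ᴴ * matA p := by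
  obtain ⟨⟨x, y, z⟩, h⟩ := p
  ext i j
  fin_cases i <;> fin_cases j <;>
    simp [matA, Matrix.mul_apply, Fin.sum_univ_two] <;> ring_nf

lemma matA_det (p : Sphere2) (t : ℂ) :
      (t • (1 : Matrix (Fin 2) (Fin 2) ℂ) - matA p).det =
        (t - 2 * ((p.1.1 : ℂ) ^ 2 + (p.1.2.1 : ℂ) ^ 2)) * (t - 2 * I * (p.1.2.2 : ℂ) ^ 2) := by
  obtain ⟨⟨x, y, z⟩, h⟩ := p
  have h' : (z : ℂ) ^ 2 = 1 - x ^ 2 - y ^ 2 := by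
    simp only at h
    rw [eq_sub_iff_add_eq, eq_sub_iff_add_eq]; norm_cast; linarith
  have hI : I ^ 2 = -1 := Complex.I_sq
  simp [Matrix.det_fin_two, matA]
  generalize (x : ℂ) = x at *
  generalize (y : ℂ) = y at *
  generalize (z : ℂ) = z at *
  clear h
  grind

/-- The contradiction from a section of the eigenline. -/
lemma no_section (e : ℝ) (he : e ^ 2 = 1) (a b : Sphere2 → ℂ) (ha : Continuous a)
    (hb : Continuous b) (hab : ∀ p, a p ≠ 0 ∨ b p ≠ 0)
    (h1 : ∀ p, (1 - e * p.1.1) * a p = e * (p.1.2.1 + I * p.1.2.2) * b p)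
    (h2 : ∀ p, (1 + e * p.1.1) * b p = e * (p.1.2.1 - I * p.1.2.2) * a p) : False := by
  have he' : (-e) ^ 2 = 1 := by simpa using he
  have heC : (e : ℂ) ^ 2 = 1 := by exact_mod_cast he
  have e0 : (e : ℂ) ≠ 0 := by intro h; simp [h] at heC
  have ha0 : ∀ w, a (ster e he w) ≠ 0 := by
    intro w h
    have := h2 (ster e he w)
    have hx : (1 + e * (ster e he w).1.1 : ℂ) ≠ 0 := by exact_mod_cast ster_x e he w
    rw [h, mul_zero, mul_eq_zero] at this
    have := hab (ster e he w)
    tauto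
  have hb0 : ∀ w, b (ster (-e) he' w) ≠ 0 := by
    intro w h
    have := h1 (ster (-e) he' w)
    have hx : (1 - e * (ster (-e) he' w).1.1 : ℂ) ≠ 0 := by
      have := ster_x (-e) he' w
      rw [neg_mul, ← sub_eq_add_neg] at this
      exact_mod_cast this
    rw [h, mul_zero, mul_eq_zero] at this
    have := hab (ster (-e) he' w)
    tauto
  refine no_ext (fun w => e * a (ster e he w) / b (ster (-e) he' w)) ?_ ?_ ?_
  · have := ster_cont e he
    have := ster_cont (-e) he'
    fun_prop (disch := exact hb0 _)
  · intro w
    exact div_ne_zero (mul_ne_zero e0 (ha0 w)) (hb0 w)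
  · intro w hw
    have E1 := ster_circ e he w hw
    have E2 := ster_circ (-e) he' w hw
    have E : ster e he w = ster (-e) he' w := Subtype.ext (E1.trans E2.symm)
    have := h1 (ster e he w)
    have hb := hb0 w
    rw [← E] at hb
    simp only [← E]
    rw [E1] at this
    rw [div_eq_iff hb]
    have hw' : (w.re : ℂ) + I * w.im = w := by rw [mul_comm]; exact Complex.re_add_im w
    simp only [hw', Complex.ofReal_zero] at this
    linear_combination (e : ℂ) * this + w * b (ster e he w) * heC

lemma no_diag (U : Sphere2 → Matrix (Fin 2) (Fin 2) ℂ) (hU : Continuous U)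
    (h1 : ∀ p, (U p)ᴴ * U p = 1) (h2 : ∀ p, ((U p)ᴴ * matA p * U p).IsDiag) : False := by
  set a : Sphere2 → ℂ := fun p => U p 0 0 with ha
  set b : Sphere2 → ℂ := fun p => U p 1 0 with hb
  have hac : Continuous a := by fun_prop
  have hbc : Continuous b := by fun_prop
  have hab : ∀ p, a p ≠ 0 ∨ b p ≠ 0 := by
    intro p
    by_contra! h
    have := congrFun (congrFun (h1 p) 0) 0
    simp only [ha, hb] at h
    simp [Matrix.mul_apply, Fin.sum_univ_two, h.1, h.2] at this
  have hx : Continuous fun p : Sphere2 => p.1.1 := continuous_subtype_val.fst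
  have hy : Continuous fun p : Sphere2 => p.1.2.1 := continuous_subtype_val.snd.fst
  have hz : Continuous fun p : Sphere2 => p.1.2.2 := continuous_subtype_val.snd.snd
  -- the two eigen-equations
  let P : Sphere2 → Prop := fun p =>
    (1 - p.1.1) * a p = (p.1.2.1 + I * p.1.2.2) * b p ∧
    (1 + p.1.1) * b p = (p.1.2.1 - I * p.1.2.2) * a p
  let Q : Sphere2 → Prop := fun p =>
    (1 + p.1.1) * a p = -(p.1.2.1 + I * p.1.2.2) * b p ∧
    (1 - p.1.1) * b p = -(p.1.2.1 - I * p.1.2.2) * a p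
  have hP : IsClosed {p | P p} :=
    (isClosed_eq (by fun_prop) (by fun_prop)).inter (isClosed_eq (by fun_prop) (by fun_prop))
  have hQ : IsClosed {p | Q p} :=
    (isClosed_eq (by fun_prop) (by fun_prop)).inter (isClosed_eq (by fun_prop) (by fun_prop))
  have hPQ : ∀ p, P p → Q p → False := by
    rintro p ⟨p1, p2⟩ ⟨q1, q2⟩
    rcases hab p with h | h
    · apply h; linear_combination (p1 + q1) / 2
    · apply h; linear_combination (p2 + q2) / 2
  have hor : ∀ p, P p ∨ Q p := by
    intro p
    have hAU : matA p * U p = U p * ((U p)ᴴ * matA p * U p) := by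
      rw [← Matrix.mul_assoc, ← Matrix.mul_assoc, mul_eq_one_comm.mp (h1 p), Matrix.one_mul]
    have hd : ((U p)ᴴ * matA p * U p) 1 0 = 0 := h2 p (by decide)
    set d := ((U p)ᴴ * matA p * U p) 0 0 with hdd
    have r0 : matA p 0 0 * a p + matA p 0 1 * b p = d * a p := by
      have := congrFun (congrFun hAU 0) 0
      rw [Matrix.mul_apply, Matrix.mul_apply (M := U p)] at this
      simp only [Fin.sum_univ_two, hd, ← hdd] at this
      linear_combination this
    have r1 : matA p 1 0 * a p + matA p 1 1 * b p = d * b p := by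
      have := congrFun (congrFun hAU 1) 0
      rw [Matrix.mul_apply, Matrix.mul_apply (M := U p)] at this
      simp only [Fin.sum_univ_two, hd, ← hdd] at this
      linear_combination this
    have hne := ev_ne p
    have hdet : (d • (1 : Matrix (Fin 2) (Fin 2) ℂ) - matA p).det = 0 := by
      simp only [Matrix.det_fin_two, Matrix.sub_apply, Matrix.smul_apply, Matrix.one_apply]
      simp
      rcases hab p with h | h
      · apply mul_left_cancel₀ h
        linear_combination (-(d - matA p 1 1)) * r0 - matA p 0 1 * r1
      · apply mul_left_cancel₀ h
        linear_combination (-(d - matA p 0 0)) * r1 - matA p 1 0 * r0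
    rw [matA_det, mul_eq_zero] at hdet
    simp only [matA, Matrix.of_apply, Matrix.cons_val_zero, Matrix.cons_val_one,
      Matrix.cons_val', Matrix.cons_val_fin_one] at r0 r1
    rcases hdet with h | h
    · left
      constructor
      · apply mul_left_cancel₀ hne
        linear_combination -r0 - a p * h
      · apply mul_left_cancel₀ hne
        linear_combination -r1 - b p * h
    · right
      constructor
      · apply mul_left_cancel₀ hne
        linear_combination r0 + a p * h
      · apply mul_left_cancel₀ hne
        linear_combination r1 + b p * h
  have hcl : IsClopen {p | P p} := by
    refine ⟨hP, ?_⟩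
    have : {p | P p} = {p | Q p}ᶜ := by
      ext p
      exact ⟨fun h h' => hPQ p h h', fun h => (hor p).resolve_right h⟩
    rw [this]; exact hQ.isOpen_compl
  have hs : ∀ (e : ℝ) (he : e ^ 2 = 1) (w w' : ℂ), P (ster e he w) → P (ster e he w') := by
    intro e he w w' h
    have := (hcl.preimage (ster_cont e he)).eq_univ ⟨w, h⟩
    have h' : w' ∈ ster e he ⁻¹' {p | P p} := by rw [this]; trivial
    exact h'
  have m1 : (1 : ℝ) ^ 2 = 1 := by norm_num
  have m2 : (-1 : ℝ) ^ 2 = 1 := by norm_num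
  have hE : ster 1 m1 1 = ster (-1) m2 1 :=
    Subtype.ext ((ster_circ 1 m1 1 (by simp)).trans (ster_circ (-1) m2 1 (by simp)).symm)
  -- every point is in one of the two charts
  have hch : ∀ p : Sphere2, ∃ (e : ℝ) (he : e ^ 2 = 1) (w : ℂ), p = ster e he w ∧ (e = 1 ∨ e = -1) := by
    intro p
    obtain ⟨⟨x, y, z⟩, h⟩ := p
    simp only at h
    have aux : ∀ e : ℝ, e ^ 2 = 1 → 0 < 1 + e * x → ∃ (he : e ^ 2 = 1) (w : ℂ),
        (⟨(x, y, z), h⟩ : Sphere2) = ster e he w := by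
      intro e he hpos
      refine ⟨he, ⟨y / (1 + e * x), z / (1 + e * x)⟩, Subtype.ext ?_⟩
      have hne := hpos.ne'
      have hD : 1 + (y / (1 + e * x)) ^ 2 + (z / (1 + e * x)) ^ 2 = 2 / (1 + e * x) := by
        field_simp
        linear_combination h + x ^ 2 * he
      have hN : 1 - (y / (1 + e * x)) ^ 2 - (z / (1 + e * x)) ^ 2 = 2 * e * x / (1 + e * x) := by
        field_simp
        linear_combination -h - x ^ 2 * he
      simp only [ster, hD, hN, Prod.mk.injEq]
      refine ⟨?_, ?_, ?_⟩
      · rw [div_div_div_cancel_right₀ hne]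
        linear_combination -x * he
      · field_simp
      · field_simp
    by_cases hx0 : 0 ≤ x
    · obtain ⟨he, w, hw⟩ := aux 1 m1 (by linarith)
      exact ⟨1, he, w, hw, Or.inl rfl⟩
    · obtain ⟨he, w, hw⟩ := aux (-1) m2 (by linarith)
      exact ⟨-1, he, w, hw, Or.inr rfl⟩
  have hall : ∀ p q, P p → P q := by
    have hto : ∀ p, P p ↔ P (ster 1 m1 1) := by
      intro p
      obtain ⟨e, he, w, rfl, rfl | rfl⟩ := hch p
      · exact ⟨hs _ _ _ _, hs _ _ _ _⟩
      · rw [hE]; exact ⟨hs _ _ _ _, hs _ _ _ _⟩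
    intro p q h
    exact (hto q).2 ((hto p).1 h)
  by_cases hp : ∃ p, P p
  · obtain ⟨p, hp⟩ := hp
    refine no_section 1 m1 a b hac hbc hab (fun q => ?_) (fun q => ?_)
    · have := (hall p q hp).1
      push_cast; linear_combination this
    · have := (hall p q hp).2
      push_cast; linear_combination this
  · push Not at hp
    refine no_section (-1) m2 a b hac hbc hab (fun q => ?_) (fun q => ?_)
    · have := ((hor q).resolve_left (hp q)).1
      push_cast; linear_combination this
    · have := ((hor q).resolve_left (hp q)).2
      push_cast; linear_combination this

/-- The matrix `matA` is pointwise normal, has characteristic polynomial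
`(t - 2(x² + y²))(t - 2iz²)` with pointwise distinct eigenvalues, and yet is not diagonalizable
by a continuous unitary over `S²`. -/
theorem stmt_9 :
    (∀ p : Sphere2, matA p * (matA p)ᴴ = (matA p)ᴴ * matA p) ∧
    (∀ p : Sphere2, ∀ t : ℂ,
      (t • (1 : Matrix (Fin 2) (Fin 2) ℂ) - matA p).det =
        (t - 2 * ((p.1.1 : ℂ) ^ 2 + (p.1.2.1 : ℂ) ^ 2)) * (t - 2 * I * (p.1.2.2 : ℂ) ^ 2)) ∧
    (∀ p : Sphere2,
      2 * ((p.1.1 : ℂ) ^ 2 + (p.1.2.1 : ℂ) ^ 2) ≠ 2 * I * (p.1.2.2 : ℂ) ^ 2) ∧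
    ¬∃ U : Sphere2 → Matrix (Fin 2) (Fin 2) ℂ, Continuous U ∧
      (∀ p, (U p)ᴴ * U p = 1) ∧ ∀ p, ((U p)ᴴ * matA p * U p).IsDiag := by
  refine ⟨matA_normal, matA_det, ?_, ?_⟩
  · intro p h
    apply ev_ne p
    linear_combination h / 2
  · rintro ⟨U, hU, h1, h2⟩
    exact no_diag U hU h1 h2
end
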